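/- Let A be a cyclic cellular algebra and λ ∈ Λ_n^Γ a Γ-multipartition of n with α = α(λ). If s is a standard λ-tableau, v ∈ V^α, and π ∈ 𝔖_n, then in A ≀ 𝔖_n, π · m^λ_{(s,v),(t^λ,1)} = x₁ + x₂ where x₁ is an R-linear combination of elements m^λ_{(u,v'),(t^λ,1)} with u a standard λ-tableau and v' ∈ V^α, and x₂ ∈ N̄^λ, the span of elements m^μ_{(s',v'),(t',w')} over μ ∈ Λ_n^Γ with μ ▷_Γ λ. -/

import Mathlib

open scoped TensorProduct

/-- A cell datum (Graham–Lehrer cellular basis, in the weak form of Definition 2.1):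
an `R`-linear algebra involution `star`, a poset `Γ`, finite index sets `T γ`, and a basis
`c γ s t` satisfying the cellular multiplication rule (modulo the span `Ā^γ` of the basis
elements `c μ u w` with `μ > γ`) and the cellular involution rule. -/
structure CellDatum (R : Type*) [CommRing R] (A : Type*) [Ring A] [Algebra R A]
    (Γ : Type*) [PartialOrder Γ] (T : Γ → Type*) [∀ γ, Fintype (T γ)] where
  star : A →ₗ[R] A
  star_mul : ∀ a b : A, star (a * b) = star b * star a
  star_star : ∀ a : A, star (star a) = a
  c : (γ : Γ) → T γ → T γ → A
  indep : LinearIndependent R fun p : Σ γ : Γ, T γ × T γ => c p.1 p.2.1 p.2.2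
  span_top : Submodule.span R (Set.range fun p : Σ γ : Γ, T γ × T γ => c p.1 p.2.1 p.2.2) = ⊤
  mult : ∀ (γ : Γ) (s : T γ) (a : A), ∃ r : T γ → R, ∀ t : T γ,
    a * c γ s t - ∑ v : T γ, r v • c γ v t ∈
      Submodule.span R {x : A | ∃ μ : Γ, γ < μ ∧ ∃ u w : T μ, x = c μ u w}
  star_c : ∀ (γ : Γ) (s t : T γ),
    star (c γ s t) - c γ t s ∈
      Submodule.span R {x : A | ∃ μ : Γ, γ < μ ∧ ∃ u w : T μ, x = c μ u w}

namespace CellDatum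

variable {R : Type*} [CommRing R] {A : Type*} [Ring A] [Algebra R A]
  {Γ : Type*} [PartialOrder Γ] {T : Γ → Type*} [∀ γ, Fintype (T γ)]

/-- The ideal `Ā^γ`, spanned by the basis elements `c μ u w` with `μ > γ`. -/
def Abar (D : CellDatum R A Γ T) (γ : Γ) : Submodule R A :=
  Submodule.span R {x : A | ∃ μ : Γ, γ < μ ∧ ∃ u w : T μ, x = D.c μ u w}

/-- The ideal `A^γ`, spanned by the basis elements `c μ u w` with `μ ≥ γ`. -/
def Aup (D : CellDatum R A Γ T) (γ : Γ) : Submodule R A :=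
  Submodule.span R {x : A | ∃ μ : Γ, γ ≤ μ ∧ ∃ u w : T μ, x = D.c μ u w}

end CellDatum

/-- `e : T γ → M` exhibits the `A`-module `M` as (a copy of) the cell module `Δ^γ`:
`e` is an `R`-basis of `M`, and `A` acts on it by the structure coefficients of the cellular
basis. -/
def IsCellModule {R : Type*} [CommRing R] {A : Type*} [Ring A] [Algebra R A]
    {Γ : Type*} [PartialOrder Γ] {T : Γ → Type*} [∀ γ, Fintype (T γ)]
    (D : CellDatum R A Γ T) (γ : Γ) (M : Type*) [AddCommGroup M] [Module R M]
    [Module A M] [IsScalarTower R A M] (e : T γ → M) : Prop :=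
  LinearIndependent R e ∧ Submodule.span R (Set.range e) = ⊤ ∧
    ∀ (a : A) (s : T γ) (r : T γ → R),
      (∀ t : T γ, a * D.c γ s t - ∑ v : T γ, r v • D.c γ v t ∈ D.Abar γ) →
      a • e s = ∑ v : T γ, r v • e v

open scoped Classical

/-- The cells of a multipartition `lam = (λ⁽¹⁾, …, λ⁽ʳ⁾)` (partitions as Young diagrams). -/
def MCells {r : ℕ} (lam : Fin r → YoungDiagram) : Type :=
  (k : Fin r) × {c : ℕ × ℕ // c ∈ (lam k).cells}

noncomputable instance {r : ℕ} (lam : Fin r → YoungDiagram) : Fintype (MCells lam) := by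
  unfold MCells; infer_instance

/-- A `λ`-tableau (a bijective filling of the cells of `λ` with `0, …, n-1`) is
*superstandard* (`t^λ`) if its entries increase in the lexicographic order on
(component, row, column). -/
def IsSuperstandard {r n : ℕ} {lam : Fin r → YoungDiagram}
    (tl : MCells lam ≃ Fin n) : Prop :=
  ∀ x y : MCells lam, tl x ≤ tl y ↔
    (x.1 < y.1 ∨ (x.1 = y.1 ∧ ((x.2 : ℕ × ℕ).1 < (y.2 : ℕ × ℕ).1 ∨
      ((x.2 : ℕ × ℕ).1 = (y.2 : ℕ × ℕ).1 ∧ (x.2 : ℕ × ℕ).2 ≤ (y.2 : ℕ × ℕ).2))))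

/-- A `λ`-tableau is *standard* if within each component its entries increase along rows and
columns. -/
def IsStdTableau {r n : ℕ} {lam : Fin r → YoungDiagram}
    (S : MCells lam ≃ Fin n) : Prop :=
  ∀ x y : MCells lam, x.1 = y.1 → (x.2 : ℕ × ℕ).1 ≤ (y.2 : ℕ × ℕ).1 →
    (x.2 : ℕ × ℕ).2 ≤ (y.2 : ℕ × ℕ).2 → x ≠ y → S x < S y

/-- A `λ`-tableau is *row standard* if within each component its entries increase along
rows. -/
def IsRowStdTableau {r n : ℕ} {lam : Fin r → YoungDiagram}
    (S : MCells lam ≃ Fin n) : Prop :=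
  ∀ x y : MCells lam, x.1 = y.1 → (x.2 : ℕ × ℕ).1 = (y.2 : ℕ × ℕ).1 →
    (x.2 : ℕ × ℕ).2 ≤ (y.2 : ℕ × ℕ).2 → S x ≤ S y

/-- The permutation `d(S)` with `S = d(S) · t^λ`. -/
def dperm {r n : ℕ} {lam : Fin r → YoungDiagram}
    (tl S : MCells lam ≃ Fin n) : Equiv.Perm (Fin n) :=
  tl.symm.trans S

/-- The Young subgroup `𝔖_λ`: the row stabilizer of the tableau `t^λ`. -/
noncomputable def rowStab {r n : ℕ} {lam : Fin r → YoungDiagram}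
    (tl : MCells lam ≃ Fin n) : Finset (Equiv.Perm (Fin n)) :=
  Finset.univ.filter fun σ => ∀ x : MCells lam,
    (tl.symm (σ (tl x))).1 = x.1 ∧
      ((tl.symm (σ (tl x))).2 : ℕ × ℕ).1 = ((x.2 : ℕ × ℕ)).1

/-- Dominance order on multipartitions relative to a listing `l` of the poset `Γ`
(`Γ`-dominance). -/
def GDomL {Γ : Type*} [PartialOrder Γ] {r : ℕ} (l : Fin r → Γ)
    (lam mu : Fin r → YoungDiagram) : Prop :=
  ∀ (k : Fin r) (j : ℕ),
    ((∑ k' ∈ Finset.univ.filter (fun k' => l k < l k'), (mu k').card)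
        + ∑ i ∈ Finset.range j, (mu k).rowLen i)
      ≤ (∑ k' ∈ Finset.univ.filter (fun k' => l k < l k'), (lam k').card)
        + ∑ i ∈ Finset.range j, (lam k).rowLen i

section Wreath

variable {R : Type*} [CommRing R] {A : Type*} [Ring A] [Algebra R A]
  {n : ℕ} {W : Type*} [Ring W] [Algebra R W]

/-- The element `(a₁ ⊗ ⋯ ⊗ aₙ) π` of the wreath product `A ≀ 𝔖_n`, realized inside the
`R`-algebra `W` via the linear isomorphism `φ` with `A^{⊗n} ⊗ R[𝔖_n]`. -/
noncomputable def wm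
    (φ : ((⨂[R] _ : Fin n, A) ⊗[R] (Equiv.Perm (Fin n) →₀ R)) ≃ₗ[R] W)
    (a : Fin n → A) (π : Equiv.Perm (Fin n)) : W :=
  φ ((PiTensorProduct.tprod R a) ⊗ₜ[R] Finsupp.single π (1 : R))

variable (φ : ((⨂[R] _ : Fin n, A) ⊗[R] (Equiv.Perm (Fin n) →₀ R)) ≃ₗ[R] W)

/-- The image in `W` of a permutation `π ∈ 𝔖_n`. -/
noncomputable def sElt (π : Equiv.Perm (Fin n)) : W := wm φ (fun _ => 1) π

/-- The element `y^α = y_{γ(α)₁} ⊗ ⋯ ⊗ y_{γ(α)ₙ}` of `A^{⊗n} ⊂ A ≀ 𝔖_n`, the tensor factor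
at position `i` being indexed by the component of `i` in `t^λ`. -/
noncomputable def yaElt {Γ : Type*} {r : ℕ} {lam : Fin r → YoungDiagram}
    (y : Γ → A) (l : Fin r → Γ) (tl : MCells lam ≃ Fin n) : W :=
  wm φ (fun i => y (l (tl.symm i).1)) 1

/-- An element `v ∈ V^α ⊂ A^{⊗n}`, given by a labelling `τ` of the cells of `λ` by elements
of the corresponding index sets. -/
noncomputable def vElt {Γ : Type*} {T : Γ → Type*} {r : ℕ} {lam : Fin r → YoungDiagram}
    (vv : (γ : Γ) → T γ → A) (l : Fin r → Γ) (tl : MCells lam ≃ Fin n)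
    (τ : ∀ x : MCells lam, T (l x.1)) : W :=
  wm φ (fun i => vv (l (tl.symm i).1) (τ (tl.symm i))) 1

/-- The element `x_λ = ∑_{σ ∈ 𝔖_λ} σ`. -/
noncomputable def xlamElt {r : ℕ} {lam : Fin r → YoungDiagram}
    (tl : MCells lam ≃ Fin n) : W :=
  ∑ σ ∈ rowStab tl, sElt φ σ

end Wreath

/-- The Murphy-type element `m^μ_{(U,τ),(U',τ')} = d(U) v_τ y^α x_μ v_{τ'}* d(U')*` of the
wreath product, relative to a superstandard tableau `tm` of `μ`. -/
noncomputable def mwElt {R : Type*} [CommRing R] {A : Type*} [Ring A] [Algebra R A]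
    {n : ℕ} {W : Type*} [Ring W] [Algebra R W]
    (φ : ((⨂[R] _ : Fin n, A) ⊗[R] (Equiv.Perm (Fin n) →₀ R)) ≃ₗ[R] W)
    (starW : W →ₗ[R] W) {Γ : Type*} {T : Γ → Type*} {r : ℕ}
    (y : Γ → A) (vv : (γ : Γ) → T γ → A) (l : Fin r → Γ)
    {mu : Fin r → YoungDiagram} (tm : MCells mu ≃ Fin n)
    (U U' : MCells mu ≃ Fin n) (τ τ' : ∀ x : MCells mu, T (l x.1)) : W :=
  sElt φ (dperm tm U) * vElt φ vv l tm τ * yaElt φ y l tm * xlamElt φ tm *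
    starW (vElt φ vv l tm τ') * starW (sElt φ (dperm tm U'))

/-!
Record a tableau by the labelling `f` of its entries by (component, row). The elements in question
are then sums of `c g d` over the permutations `g` carrying a labelling `h` to `f`, where `c` and
`d` are pure tensors in `A^{⊗n}`. Two moves straighten such a sum.

* If `f` violates the ballot condition in rows `i` and `i + 1` of a component, inclusion-exclusion
  over the redistributions of these two rows (the Garnir relation) expresses the sum through
  lexicographically smaller labellings with the same row lengths and through labellings with more
  entries in the upper rows. Ballot labellings are exactly the row labellings of standard tableaux.
* If a tensor factor lies in `Ā^γ`, it is a combination of elements `u * y γ' * w` with `γ' > γ`.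
  Moving `w` across the permutations leaves sums in which the entry at this factor is relabelled by
  an unused row of the component of `γ'`.

The terms that are not lexicographically smaller have more entries in the initial parts compared by
`Γ`-dominance, and a sum whose labelling strictly dominates that of a `λ`-tableau lies in `N̄^λ` by
repeating the two moves.
-/

section LabelSum

open Function

lemma sum_filter_comp_mem {ι κ W S : Type*} [AddCommMonoid W] [SetLike S W]
    [AddSubmonoidClass S W] [DecidableEq κ] {N : S} {s : Finset ι} {F : ι → W} {q : ι → κ}
    {P : κ → Prop} [DecidablePred P]
    (hN : ∀ c, P c → ∑ i ∈ s with q i = c, F i ∈ N) : ∑ i ∈ s with P (q i), F i ∈ N := by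
  rw [← Finset.sum_fiberwise_of_maps_to (t := {i ∈ s | P (q i)}.image q)
    fun i hi => Finset.mem_image_of_mem q hi]
  refine sum_mem fun c hc => ?_
  obtain ⟨i, hi, rfl⟩ := Finset.mem_image.1 hc
  convert hN (q i) (Finset.mem_filter.1 hi).2 using 2
  rw [Finset.filter_filter]
  exact Finset.filter_congr fun j _ => ⟨And.right, fun hj => ⟨hj ▸ (Finset.mem_filter.1 hi).2, hj⟩⟩

lemma comp_perm_eq_iff {α L : Type*} {f h : α → L} {g : Equiv.Perm α} :
    f ∘ g = h ↔ h ∘ ⇑g⁻¹ = f :=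
  eq_comm.trans (Equiv.comp_symm_eq g f h).symm

variable {α L W : Type*} [DecidableEq α]

lemma update_one_comp_update {B : Type*} [One B] [DecidableEq L] {f : α → L} {c : L}
    (hc : ∀ x, f x ≠ c) (i : α) (b : B) :
    update (1 : L → B) c b ∘ update f i c = update (1 : α → B) i b := by
  rw [comp_update, update_self]
  congr 1
  funext x
  simp [hc x]

lemma update_comp_perm_eq_update_iff {f h : α → L} {i j : α} {c : L} {g : Equiv.Perm α}
    (hc : ∀ x, f x ≠ c) (hij : h j = f i) :
    update f i c ∘ g = update h j c ↔ f ∘ g = h ∧ g j = i := by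
  constructor
  · intro hg
    have hgj : g j = i := by
      by_contra hne
      have := congrFun hg j
      rw [comp_apply, update_of_ne hne, update_self] at this
      exact hc _ this
    refine ⟨funext fun x => ?_, hgj⟩
    rcases eq_or_ne x j with rfl | hx
    · rw [comp_apply, hgj, hij]
    · have := congrFun hg x
      rwa [comp_apply, update_of_ne fun e => hx (g.injective (e.trans hgj.symm)),
        update_of_ne hx] at this
  · rintro ⟨rfl, rfl⟩
    exact update_comp_eq_of_injective f g.injective j c

section AddCommMonoid

variable [Fintype α] [AddCommMonoid W]

/-- The sum of `F g` over the permutations `g` carrying the labelling `h` to the labelling `f`.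
For a single labelling `f = h` and `F` the inclusion of the symmetric group in its group ring, this
is the sum of the Young subgroup of `f`. -/
noncomputable def labelSum (F : Equiv.Perm α → W) (f h : α → L) : W :=
  ∑ g ∈ {g : Equiv.Perm α | f ∘ g = h}, F g

lemma labelSum_eq_sum_inv (F : Equiv.Perm α → W) (f h : α → L) :
    labelSum F f h = ∑ g ∈ {g : Equiv.Perm α | h ∘ ⇑g⁻¹ = f}, F g :=
  Finset.sum_congr (Finset.filter_congr fun _ _ => comp_perm_eq_iff) fun _ _ => rfl

lemma labelSum_inv (F : Equiv.Perm α → W) (f h : α → L) :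
    labelSum (fun g => F g⁻¹) h f = labelSum F f h :=
  Finset.sum_equiv (Equiv.inv _) (fun g => by simp [comp_perm_eq_iff (f := h)]) fun _ _ => rfl

lemma labelSum_eq_sum_update_left (F : Equiv.Perm α → W) {f : α → L} (h : α → L) (i : α) {c : L}
    (hc : ∀ x, f x ≠ c) :
    labelSum F f h = ∑ j with h j = f i, labelSum F (update f i c) (update h j c) := by
  have maps : ∀ g ∈ ({g | f ∘ g = h} : Finset (Equiv.Perm α)),
      g⁻¹ i ∈ ({j | h j = f i} : Finset α) := by
    intro g hg
    obtain rfl := (Finset.mem_filter.1 hg).2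
    simp
  rw [labelSum, ← Finset.sum_fiberwise_of_maps_to maps]
  refine Finset.sum_congr rfl fun j hj => ?_
  rw [labelSum, Finset.filter_filter]
  refine Finset.sum_congr (Finset.filter_congr fun g _ => ?_) fun _ _ => rfl
  rw [update_comp_perm_eq_update_iff hc (Finset.mem_filter.1 hj).2, Equiv.Perm.inv_eq_iff_eq,
    eq_comm (a := i)]

lemma labelSum_eq_sum_update_right (F : Equiv.Perm α → W) (f : α → L) {h : α → L} (j : α) {c : L}
    (hc : ∀ x, h x ≠ c) :
    labelSum F f h = ∑ i with f i = h j, labelSum F (update f i c) (update h j c) := by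
  simp only [← labelSum_inv F]
  exact labelSum_eq_sum_update_left _ f j hc

section SetLike

variable {S : Type*} [SetLike S W] [AddSubmonoidClass S W] {N : S} {F : Equiv.Perm α → W}
  {f h : α → L}

lemma labelSum_mem_of_comp_eq (hN : ∀ g : Equiv.Perm α, f ∘ g = h → labelSum F f h ∈ N) :
    labelSum F f h ∈ N := by
  by_cases hfh : ∃ g : Equiv.Perm α, f ∘ g = h
  · exact hfh.elim hN
  · rw [labelSum, Finset.filter_false_of_mem fun g _ hg => hfh ⟨g, hg⟩, Finset.sum_empty]
    exact zero_mem N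

lemma sum_comp_perm_mem {P : (α → L) → Prop} [DecidablePred P]
    (hN : ∀ h, P h → labelSum F f h ∈ N) :
    ∑ g ∈ {g : Equiv.Perm α | P (f ∘ g)}, F g ∈ N :=
  sum_filter_comp_mem hN

lemma sum_comp_inv_mem {P : (α → L) → Prop} [DecidablePred P]
    (hN : ∀ f, P f → labelSum F f h ∈ N) :
    ∑ g ∈ {g : Equiv.Perm α | P (h ∘ ⇑g⁻¹)}, F g ∈ N :=
  sum_filter_comp_mem fun f hf => labelSum_eq_sum_inv F f h ▸ hN f hf

end SetLike

end AddCommMonoid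

section Garnir

/-- The labelling obtained from `f` by merging the blocks labelled `p` and `q` and then splitting
the merged block again, the points of `S` being labelled `q` and the others `p`. -/
noncomputable def mergeLabels (f : α → L) (p q : L) (S : Finset α) (x : α) : L :=
  if f x = p ∨ f x = q then if x ∈ S then q else p else f x

/-- The labelling `f'` arises from `f` by distributing the labels `p` and `q` anew over the merged
block of all points labelled `p` or `q`, with `S` labelled `q` and `Q` labelled `p`. -/
structure IsRedistribution (f : α → L) (p q : L) (S Q : Finset α) (f' : α → L) : Prop where
  outside : ∀ x, f x ≠ p → f x ≠ q → f' x = f x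
  inside : ∀ x, f x = p ∨ f x = q → f' x = p ∨ f' x = q
  right : ∀ x ∈ S, f' x = q
  left : ∀ x ∈ Q, f' x = p

variable {f f' : α → L} {p q : L} {S Q : Finset α}

lemma isRedistribution_empty_iff (hS : ∀ x ∈ S, f x = p ∨ f x = q) :
    IsRedistribution f p q S ∅ f' ↔
      ∀ x, f' x = mergeLabels f p q S x ∨ mergeLabels f p q S x = p ∧ f' x = q := by
  refine ⟨fun hf x => ?_, fun hf => ⟨fun x hp hq => ?_, fun x hx => ?_, fun x hx => ?_, by simp⟩⟩
  · have := hf.outside x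
    have := hf.inside x
    have := hf.right x
    grind [mergeLabels]
  all_goals
    have := hf x
    grind [mergeLabels]

lemma isRedistribution_insert_left_iff {x : α} :
    IsRedistribution f p q S (insert x Q) f' ↔ IsRedistribution f p q S Q f' ∧ f' x = p := by
  refine ⟨fun hf => ⟨⟨hf.outside, hf.inside, hf.right, fun y hy => ?_⟩, ?_⟩,
    fun hf => ⟨hf.1.outside, hf.1.inside, hf.1.right, ?_⟩⟩
  · exact hf.left y (Finset.mem_insert_of_mem hy)
  · exact hf.left x (Finset.mem_insert_self x Q)
  · exact (Finset.forall_mem_insert ..).2 ⟨hf.2, hf.1.left⟩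

lemma isRedistribution_insert_right_iff {x : α} (hpq : p ≠ q) (hx : f x = p ∨ f x = q) :
    IsRedistribution f p q (insert x S) Q f' ↔ IsRedistribution f p q S Q f' ∧ f' x ≠ p := by
  constructor
  · intro hf
    refine ⟨⟨hf.outside, hf.inside, fun y hy => ?_, hf.left⟩, ?_⟩
    · exact hf.right y (Finset.mem_insert_of_mem hy)
    · exact hf.right x (Finset.mem_insert_self x S) ▸ hpq.symm
  · rintro ⟨hf, hfx⟩
    refine ⟨hf.outside, hf.inside, (Finset.forall_mem_insert ..).2 ⟨?_, hf.right⟩, hf.left⟩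
    exact (hf.inside x hx).resolve_left hfx

variable [Fintype α] [AddCommGroup W] {M : Type*} [SetLike M W] [AddSubgroupClass M W] {N : M}
  {F : Equiv.Perm α → W} {h : α → L}

lemma sum_isRedistribution_empty_mem (hS : ∀ x ∈ S, f x = p ∨ f x = q)
    (hN : ∀ h', (∀ x, h x = h' x ∨ h' x = p ∧ h x = q) →
      labelSum F (mergeLabels f p q S) h' ∈ N) :
    ∑ g ∈ {g : Equiv.Perm α | IsRedistribution f p q S ∅ (h ∘ ⇑g⁻¹)}, F g ∈ N := by
  have rearrange (g : Equiv.Perm α) : IsRedistribution f p q S ∅ (h ∘ ⇑g⁻¹) ↔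
      ∀ x, h x = (mergeLabels f p q S ∘ g) x ∨ (mergeLabels f p q S ∘ g) x = p ∧ h x = q := by
    rw [isRedistribution_empty_iff hS, ← g.forall_congr_right]
    simp
  simp only [rearrange]
  exact sum_comp_perm_mem (P := fun h' => ∀ x, h x = h' x ∨ h' x = p ∧ h x = q) hN

/-- The Garnir relation. Since `S ∪ Q` is too small to contain a full block of `q`s, inclusion and
exclusion over `Q` writes the sum in terms of sums with merged labels on the left. -/
lemma sum_isRedistribution_mem (hpq : p ≠ q) {b : ℕ}
    (hN : ∀ (S : Finset α) (h' : α → L), (∀ x ∈ S, f x = p ∨ f x = q) → S.card < b →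
      (∀ x, h x = h' x ∨ h' x = p ∧ h x = q) → labelSum F (mergeLabels f p q S) h' ∈ N)
    (hS : ∀ x ∈ S, f x = p ∨ f x = q) (hQ : ∀ x ∈ Q, f x = p ∨ f x = q)
    (hcard : S.card + Q.card < b) :
    ∑ g ∈ {g : Equiv.Perm α | IsRedistribution f p q S Q (h ∘ ⇑g⁻¹)}, F g ∈ N := by
  induction Q using Finset.induction_on generalizing S with
  | empty => exact sum_isRedistribution_empty_mem hS fun h' => hN S h' hS hcard
  | insert x Q hxQ ih =>
    rw [Finset.card_insert_of_notMem hxQ] at hcard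
    obtain ⟨hx, hQ⟩ := (Finset.forall_mem_insert ..).1 hQ
    have total := ih hS hQ (by omega)
    have complement := ih (S := insert x S) ((Finset.forall_mem_insert ..).2 ⟨hx, hS⟩) hQ
      (by have := Finset.card_insert_le x S; omega)
    simp only [isRedistribution_insert_right_iff hpq hx, ← Finset.filter_filter] at complement
    simp only [isRedistribution_insert_left_iff, ← Finset.filter_filter]
    rw [← Finset.sum_filter_add_sum_filter_not _ fun g : Equiv.Perm α => (h ∘ ⇑g⁻¹) x = p] at total
    exact (add_mem_cancel_right complement).1 total

lemma labelSum_mem_of_sum_isRedistribution_mem (hS : ∀ x ∈ S, f x = q) (hQ : ∀ x ∈ Q, f x = p)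
    (hsum : ∑ g ∈ {g : Equiv.Perm α | IsRedistribution f p q S Q (h ∘ ⇑g⁻¹)}, F g ∈ N)
    (hN : ∀ f', IsRedistribution f p q S Q f' ∧ f' ≠ f → labelSum F f' h ∈ N) :
    labelSum F f h ∈ N := by
  have self : IsRedistribution f p q S Q f := ⟨fun _ _ _ => rfl, fun _ => id, hS, hQ⟩
  rw [← Finset.sum_filter_add_sum_filter_not _ fun g : Equiv.Perm α => h ∘ ⇑g⁻¹ = f,
    Finset.filter_filter, Finset.filter_filter] at hsum
  rw [labelSum_eq_sum_inv]
  convert (add_mem_cancel_right (sum_comp_inv_mem hN)).1 hsum using 3 with g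
  exact ⟨fun hg => ⟨hg ▸ self, hg⟩, And.right⟩

end Garnir

end LabelSum

section Straightening

variable {α κ : Type*}

lemma IsRedistribution.fst_comp {f f' : α → κ × ℕ} {k : κ} {i j : ℕ} {S Q : Finset α}
    (hf : IsRedistribution f (k, i) (k, j) S Q f') : Prod.fst ∘ f' = Prod.fst ∘ f := by
  funext x
  by_cases hx : f x = (k, i) ∨ f x = (k, j)
  · rcases hx with hx | hx <;> rcases hf.inside x (by simp [hx]) with hx' | hx' <;> simp [hx, hx']
  · rw [not_or] at hx
    simp [hf.outside x hx.1 hx.2]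

variable [DecidableEq κ] [Fintype α]

/-- The number of points labelled by one of the first `j` rows of component `k`, for a labelling by
pairs (component, row). -/
def rowsBelow (f : α → κ × ℕ) (k : κ) (j : ℕ) : ℕ :=
  Finset.card {x | (f x).1 = k ∧ (f x).2 < j}

lemma rowsBelow_comp_perm (f : α → κ × ℕ) (g : Equiv.Perm α) :
    rowsBelow (f ∘ g) = rowsBelow f := by
  funext k j
  exact Finset.card_equiv g fun x => by simp

lemma rowsBelow_eq_of_comp_eq {f h : α → κ × ℕ} {g : Equiv.Perm α} (hg : f ∘ g = h) :
    rowsBelow f = rowsBelow h :=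
  hg ▸ (rowsBelow_comp_perm f g).symm

lemma card_filter_eq_of_comp_eq {β : Type*} [DecidableEq β] {f h : α → β} {g : Equiv.Perm α}
    (hg : f ∘ g = h) (c : β) : Finset.card {x | h x = c} = Finset.card {x | f x = c} :=
  Finset.card_equiv g fun x => by simp [← hg]

lemma rowsBelow_succ (f : α → κ × ℕ) (k : κ) (j : ℕ) :
    rowsBelow f k (j + 1) = rowsBelow f k j + Finset.card {x | f x = (k, j)} := by
  rw [rowsBelow, rowsBelow, ← Finset.card_union_of_disjoint, ← Finset.filter_or]
  · congr 1
    ext x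
    simp only [Finset.mem_filter, Finset.mem_univ, true_and, Prod.ext_iff, Order.lt_add_one_iff,
      le_iff_lt_or_eq, and_or_left]
  · refine Finset.disjoint_filter.2 fun x _ hx hxj => ?_
    simp [hxj] at hx

/-- The labelling `f'` arises from `f` by keeping components and strictly moving points up, that is
to rows of smaller index, in the dominance order. -/
structure IsRaise (f f' : α → κ × ℕ) : Prop where
  fst_comp : Prod.fst ∘ f' = Prod.fst ∘ f
  rowsBelow_lt : rowsBelow f < rowsBelow f'

lemma isRaise_mergeLabels [DecidableEq α] {f : α → κ × ℕ} {k : κ} {i : ℕ} {S : Finset α}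
    (hS : ∀ x ∈ S, f x = (k, i) ∨ f x = (k, i + 1))
    (hcard : S.card < Finset.card {x | f x = (k, i + 1)}) :
    IsRaise f (mergeLabels f (k, i) (k, i + 1) S) := by
  set f' := mergeLabels f (k, i) (k, i + 1) S
  have fst_eq (x : α) : (f' x).1 = (f x).1 := by grind [mergeLabels]
  have rowsBelow_eq {k' : κ} {j : ℕ} (hkj : ¬ (k' = k ∧ j = i + 1)) :
      rowsBelow f k' j = rowsBelow f' k' j := by
    refine congrArg Finset.card (Finset.filter_congr fun x _ => ?_)
    grind [mergeLabels]
  have lt : rowsBelow f k (i + 1) < rowsBelow f' k (i + 1) := by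
    have hcard' : Finset.card {x | f' x = (k, i + 1)} = S.card := by
      congr 1
      ext x
      have := hS x
      grind [mergeLabels]
    have := rowsBelow_eq (k' := k) (j := i + 2) (by simp)
    rw [rowsBelow_succ f, rowsBelow_succ f', hcard'] at this
    omega
  have le (k' : κ) (j : ℕ) : rowsBelow f k' j ≤ rowsBelow f' k' j := by
    by_cases hkj : k' = k ∧ j = i + 1
    · exact hkj.1 ▸ hkj.2 ▸ lt.le
    · exact (rowsBelow_eq hkj).le
  exact ⟨funext fst_eq, Pi.lt_def.2 ⟨le, k, Pi.lt_def.2 ⟨le k, i + 1, lt⟩⟩⟩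

lemma sum_rowsBelow_add_sum_row [Fintype κ] {f : α → κ × ℕ} {b : ℕ} (hb : ∀ x, (f x).2 ≤ b) :
    ∑ k, ∑ j ∈ Finset.range b, rowsBelow f k (j + 1) + ∑ x, (f x).2 = Fintype.card α * b := by
  have pointwise (x : α) :
      ∑ k, ∑ j ∈ Finset.range b, (if (f x).1 = k ∧ (f x).2 < j + 1 then 1 else 0) =
        b - (f x).2 := by
    simp only [ite_and, Finset.sum_ite_irrel, Finset.sum_const_zero, Finset.sum_ite_eq,
      Finset.mem_univ, if_true, Nat.lt_succ_iff]
    rw [← Finset.card_filter, ← Nat.card_Ico]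
    congr 1
    ext j
    simp [and_comm]
  simp only [rowsBelow, Finset.card_filter]
  rw [Finset.sum_congr rfl fun k _ => Finset.sum_comm, Finset.sum_comm, ← Finset.sum_add_distrib,
    Finset.sum_congr rfl fun x _ => by rw [pointwise, Nat.sub_add_cancel (hb x)],
    Finset.sum_const, Finset.card_univ, smul_eq_mul]

lemma sum_row_lt_of_rowsBelow_lt [Finite κ] {f f' : α → κ × ℕ}
    (hlt : rowsBelow f < rowsBelow f') : ∑ x, (f' x).2 < ∑ x, (f x).2 := by
  have := Fintype.ofFinite κ
  obtain ⟨hle, k, hk⟩ := Pi.lt_def.1 hlt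
  obtain ⟨-, j, hj⟩ := Pi.lt_def.1 hk
  obtain _ | j := j
  · simp [rowsBelow] at hj
  set b := ∑ x, (f x).2 + ∑ x, (f' x).2 + (j + 1)
  have hf : ∀ x, (f x).2 ≤ b := fun x => by
    have := Finset.single_le_sum (fun x _ => Nat.zero_le (f x).2) (Finset.mem_univ x)
    omega
  have hf' : ∀ x, (f' x).2 ≤ b := fun x => by
    have := Finset.single_le_sum (fun x _ => Nat.zero_le (f' x).2) (Finset.mem_univ x)
    omega
  have sum_lt : ∑ k, ∑ j ∈ Finset.range b, rowsBelow f k (j + 1) <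
      ∑ k, ∑ j ∈ Finset.range b, rowsBelow f' k (j + 1) :=
    Finset.sum_lt_sum (fun k _ => Finset.sum_le_sum fun j _ => hle k _)
      ⟨k, Finset.mem_univ k, Finset.sum_lt_sum (fun j _ => hle k _)
        ⟨j, Finset.mem_range.2 (by omega), hj⟩⟩
  have := sum_rowsBelow_add_sum_row hf
  have := sum_rowsBelow_add_sum_row hf'
  omega

variable {W M : Type*} [AddCommGroup W] [SetLike M W] [AddSubgroupClass M W] {N : M}
  {F : Equiv.Perm α → W}

lemma labelSum_mem_of_card_lt_card [DecidableEq α] {f h : α → κ × ℕ} {k : κ} {i : ℕ}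
    {s : Finset α}
    (hs : Finset.card {x ∈ s | f x = (k, i)} < Finset.card {x ∈ s | f x = (k, i + 1)})
    (hraise : ∀ f' h', IsRaise f f' → Prod.fst ∘ h' = Prod.fst ∘ h → labelSum F f' h' ∈ N)
    (hN : ∀ f', IsRedistribution f (k, i) (k, i + 1) {x | x ∉ s ∧ f x = (k, i + 1)}
      {x ∈ s | f x = (k, i)} f' ∧ f' ≠ f → labelSum F f' h ∈ N) :
    labelSum F f h ∈ N := by
  have hcard : Finset.card {x | x ∉ s ∧ f x = (k, i + 1)} + Finset.card {x ∈ s | f x = (k, i)} <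
      Finset.card {x | f x = (k, i + 1)} := by
    have := Finset.card_filter_add_card_filter_not (s := {x | f x = (k, i + 1)}) (· ∈ s)
    simp only [Finset.filter_filter, and_comm (a := f _ = _)] at this
    rw [← Finset.filter_filter, Finset.filter_univ_mem] at this
    omega
  refine labelSum_mem_of_sum_isRedistribution_mem (p := (k, i)) (q := (k, i + 1))
    (by simp) (by simp) (sum_isRedistribution_mem (by simp) (fun S h' hS hSq hh' => ?_)
      (by simp +contextual) (by simp +contextual) hcard) hN
  refine hraise _ h' (isRaise_mergeLabels hS hSq) (funext fun x => ?_)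
  rcases hh' x with hx | ⟨hp, hq⟩ <;> simp [*]

variable [LinearOrder α]

/-- The ballot condition: in every initial segment, each row label of a component occurs at least
as often as the next row label of that component. These are the row labellings of standard
tableaux. -/
def IsBallot (f : α → κ × ℕ) : Prop :=
  ∀ s : Finset α, IsLowerSet (s : Set α) → ∀ k i,
    Finset.card {x ∈ s | f x = (k, i + 1)} ≤ Finset.card {x ∈ s | f x = (k, i)}

/- Such a redistribution can only decrease row indices inside `s` and increase them outside. -/
lemma IsRedistribution.toLex_lt {f f' : α → κ × ℕ} {k : κ} {i : ℕ} {s : Finset α}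
    (hs : IsLowerSet (s : Set α))
    (hf : IsRedistribution f (k, i) (k, i + 1) {x | x ∉ s ∧ f x = (k, i + 1)}
      {x ∈ s | f x = (k, i)} f')
    (hne : f' ≠ f) (hsum : ∑ x, (f' x).2 = ∑ x, (f x).2) :
    toLex (Prod.snd ∘ f') < toLex (Prod.snd ∘ f) := by
  have pointwise (x : α) : (x ∈ s → (f' x).2 ≤ (f x).2) ∧ (x ∉ s → (f x).2 ≤ (f' x).2) := by
    have hl := hf.left x
    have hr := hf.right x
    by_cases hx : f x = (k, i) ∨ f x = (k, i + 1)
    · rcases hx with hx | hx <;> rcases hf.inside x (by simp [hx]) with hx' | hx' <;>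
        simp_all
    · rw [not_or] at hx
      simp [hf.outside x hx.1 hx.2]
  have snd_ne : toLex (Prod.snd ∘ f') ≠ toLex (Prod.snd ∘ f) := fun h =>
    hne (funext fun x => Prod.ext (congrFun hf.fst_comp x) (congrFun (toLex.injective h) x))
  refine snd_ne.lt_or_gt.resolve_right ?_
  rintro ⟨x, hx, hlt⟩
  have hxs : x ∉ s := fun hxs => (((pointwise x).1 hxs).trans_lt hlt).false
  refine (Finset.sum_lt_sum (fun z _ => ?_) ⟨x, Finset.mem_univ x, hlt⟩).ne' hsum
  rcases lt_or_ge z x with hz | hz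
  · exact (hx z hz).le
  · exact (pointwise z).2 fun hzs => hxs (hs hz hzs)

lemma labelSum_mem_of_isBallot_left (f h : α → κ × ℕ)
    (hraise : ∀ f' h', IsRaise f f' → Prod.fst ∘ h' = Prod.fst ∘ h → labelSum F f' h' ∈ N)
    (hballot : ∀ f', IsBallot f' → Prod.fst ∘ f' = Prod.fst ∘ f → labelSum F f' h ∈ N) :
    labelSum F f h ∈ N := by
  induction hw : toLex (Prod.snd ∘ f) using WellFoundedLT.induction generalizing f with
  | ind w ih =>
    subst hw
    refine labelSum_mem_of_comp_eq fun g hg => ?_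
    by_cases hf : IsBallot f
    · exact hballot f hf rfl
    simp only [IsBallot, not_forall, not_le] at hf
    obtain ⟨s, hs, k, i, hlt⟩ := hf
    refine labelSum_mem_of_card_lt_card hlt hraise fun f' ⟨hf', hne⟩ => ?_
    refine labelSum_mem_of_comp_eq fun g' hg' => ?_
    have fst_eq := hf'.fst_comp
    have hperm : f' = f ∘ ⇑(g * g'⁻¹) := by
      rw [Equiv.Perm.coe_mul, ← Function.comp_assoc, hg, comp_perm_eq_iff.1 hg']
    have rows_eq : rowsBelow f' = rowsBelow f := hperm ▸ rowsBelow_comp_perm f _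
    have sum_eq : ∑ x, (f' x).2 = ∑ x, (f x).2 :=
      hperm ▸ Equiv.sum_comp (g * g'⁻¹) fun x => (f x).2
    refine ih _ (hf'.toLex_lt hs hne sum_eq) f' (fun f'' h' hr => ?_) (fun f'' hf'' h => ?_) rfl
    · exact hraise f'' h' ⟨hr.fst_comp.trans fst_eq, rows_eq ▸ hr.rowsBelow_lt⟩
    · exact hballot f'' hf'' (h.trans fst_eq)

lemma labelSum_mem_of_isBallot [Finite κ] (f h : α → κ × ℕ)
    (hN : ∀ f' h', IsBallot f' → IsBallot h' → Prod.fst ∘ f' = Prod.fst ∘ f →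
      Prod.fst ∘ h' = Prod.fst ∘ h → rowsBelow f ≤ rowsBelow f' → labelSum F f' h' ∈ N) :
    labelSum F f h ∈ N := by
  induction hd : ∑ x, (f x).2 using WellFoundedLT.induction generalizing f h with
  | ind d ih =>
    subst hd
    have raised {f' h' : α → κ × ℕ} (hf' : Prod.fst ∘ f' = Prod.fst ∘ f)
        (hh' : Prod.fst ∘ h' = Prod.fst ∘ h) (hlt : rowsBelow f < rowsBelow f') :
        labelSum F f' h' ∈ N :=
      ih _ (sum_row_lt_of_rowsBelow_lt hlt) f' h' (fun f'' h'' bf bh cf ch hle =>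
        hN f'' h'' bf bh (cf.trans hf') (ch.trans hh') (hlt.le.trans hle)) rfl
    refine labelSum_mem_of_comp_eq fun g hg => ?_
    refine labelSum_mem_of_isBallot_left f h
      (fun f' h' hr hh' => raised hr.fst_comp hh' hr.rowsBelow_lt) fun f' bf' cf' => ?_
    refine labelSum_mem_of_comp_eq fun g' hg' => ?_
    rw [← labelSum_inv]
    refine labelSum_mem_of_isBallot_left h f' (fun h' f'' hr cf'' => ?_) fun h' bh' ch' => ?_
    all_goals rw [labelSum_inv]
    · refine labelSum_mem_of_comp_eq fun g'' hg'' => raised (cf''.trans cf') hr.fst_comp ?_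
      rw [rowsBelow_eq_of_comp_eq hg, rowsBelow_eq_of_comp_eq hg'']
      exact hr.rowsBelow_lt
    · refine hN f' h' bf' bh' cf' ch' ?_
      rw [rowsBelow_eq_of_comp_eq hg, rowsBelow_eq_of_comp_eq hg']

end Straightening

lemma mem_span_range_sup_of_smodEq {R M ι : Type*} [Ring R] [AddCommGroup M] [Module R M]
    [Fintype ι] {N : Submodule R M} {x : M} {q : ι → R} {w : ι → M}
    (h : x ≡ ∑ i, q i • w i [SMOD N]) : x ∈ Submodule.span R (Set.range w) ⊔ N :=
  Submodule.mem_sup.2 ⟨∑ i, q i • w i, (Submodule.mem_span_range_iff_exists_fun R).2 ⟨q, rfl⟩,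
    x - ∑ i, q i • w i, SModEq.sub_mem.1 h, add_sub_cancel _ x⟩

namespace CellDatum

variable {R : Type*} [CommRing R] {A : Type*} [Ring A] [Algebra R A]
  {Γ : Type*} [PartialOrder Γ] {T : Γ → Type*} [∀ γ, Fintype (T γ)] (D : CellDatum R A Γ T)

lemma Abar_anti {γ μ : Γ} (h : γ ≤ μ) : D.Abar μ ≤ D.Abar γ :=
  Submodule.span_mono fun _ ⟨ν, hν, hx⟩ => ⟨ν, h.trans_lt hν, hx⟩

lemma c_mem_Abar {γ μ : Γ} (h : γ < μ) (s t : T μ) : D.c μ s t ∈ D.Abar γ :=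
  Submodule.subset_span ⟨μ, h, s, t, rfl⟩

lemma star_one : D.star 1 = 1 := by
  simpa [D.star_star] using (D.star_mul (D.star 1) 1).symm

variable {γ : Γ} {x z : A}

lemma mul_mem_Abar (a : A) (hx : x ∈ D.Abar γ) : a * x ∈ D.Abar γ := by
  unfold Abar at hx
  induction hx using Submodule.span_induction with
  | mem x hx =>
    obtain ⟨μ, hμ, u, w, rfl⟩ := hx
    obtain ⟨c, hc⟩ := D.mult μ u a
    exact (Submodule.sub_mem_iff_left _ <| Submodule.sum_mem _ fun v _ =>
      Submodule.smul_mem _ _ (D.c_mem_Abar hμ v w)).1 (D.Abar_anti hμ.le (hc w))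
  | zero => simp
  | add x y _ _ hx hy => rw [mul_add]; exact Submodule.add_mem _ hx hy
  | smul c x _ hx => rw [mul_smul_comm]; exact Submodule.smul_mem _ _ hx

lemma star_mem_Abar (hx : x ∈ D.Abar γ) : D.star x ∈ D.Abar γ := by
  suffices h : D.Abar γ ≤ (D.Abar γ).comap D.star from h hx
  refine Submodule.span_le.2 ?_
  rintro _ ⟨μ, hμ, u, w, rfl⟩
  exact (Submodule.sub_mem_iff_left _ (D.c_mem_Abar hμ w u)).1
    (D.Abar_anti hμ.le (D.star_c μ u w))

lemma Abar_mul_mem (a : A) (hx : x ∈ D.Abar γ) : x * a ∈ D.Abar γ := by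
  rw [← D.star_star (x * a), D.star_mul]
  exact D.star_mem_Abar (D.mul_mem_Abar _ (D.star_mem_Abar hx))

lemma smodEq_mul_left (a : A) (h : x ≡ z [SMOD D.Abar γ]) : a * x ≡ a * z [SMOD D.Abar γ] := by
  rw [SModEq.sub_mem] at h ⊢
  simpa only [mul_sub] using D.mul_mem_Abar a h

lemma smodEq_mul_right (a : A) (h : x ≡ z [SMOD D.Abar γ]) : x * a ≡ z * a [SMOD D.Abar γ] := by
  rw [SModEq.sub_mem] at h ⊢
  simpa only [sub_mul] using D.Abar_mul_mem a h

lemma smodEq_star (h : x ≡ z [SMOD D.Abar γ]) : D.star x ≡ D.star z [SMOD D.Abar γ] := by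
  rw [SModEq.sub_mem] at h ⊢
  simpa only [map_sub] using D.star_mem_Abar h

/-- The lift to `A` of a pure tensor under the bimodule isomorphism `Δ^γ ⊗ (Δ^γ)* ≅ A^γ / Ā^γ`,
its two factors being given by their coordinates in the basis of `Δ^γ`. -/
def cellTensor (q q' : T γ → R) : A := ∑ s, ∑ t, (q s * q' t) • D.c γ s t

lemma cellTensor_eq_sum_smul (q q' : T γ → R) :
    D.cellTensor q q' = ∑ t, q' t • ∑ s, q s • D.c γ s t := by
  simp only [cellTensor, Finset.smul_sum, smul_smul]
  rw [Finset.sum_comm]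
  simp only [mul_comm]

lemma cellTensor_single_single (s t : T γ) :
    D.cellTensor (Pi.single s 1) (Pi.single t 1) = D.c γ s t := by
  simp [cellTensor_eq_sum_smul, Pi.single_apply]

lemma cellTensor_eq_sum_single_left (q q' : T γ → R) :
    D.cellTensor q q' = ∑ s, q s • D.cellTensor (Pi.single s 1) q' := by
  simp [cellTensor, Pi.single_apply, Finset.smul_sum, smul_smul]

lemma cellTensor_eq_sum_single_right (q q' : T γ → R) :
    D.cellTensor q q' = ∑ t, q' t • D.cellTensor q (Pi.single t 1) := by
  simp [cellTensor_eq_sum_smul, Pi.single_apply]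

lemma star_cellTensor (q q' : T γ → R) :
    D.star (D.cellTensor q q') ≡ D.cellTensor q' q [SMOD D.Abar γ] := by
  have hswap : D.cellTensor q' q = ∑ s, ∑ t, (q s * q' t) • D.c γ t s := by
    simp only [cellTensor_eq_sum_smul, Finset.smul_sum, smul_smul]
  rw [hswap]
  simp only [cellTensor, map_sum, map_smul]
  exact SModEq.sum fun s _ => SModEq.sum fun t _ => (SModEq.sub_mem.2 (D.star_c γ s t)).smul _

variable {M : Type*} [AddCommGroup M] [Module R M] [Module A M] [IsScalarTower R A M]
  {e : T γ → M}

lemma mul_cellTensor (hM : IsCellModule D γ M e) {a : A} {q q₁ : T γ → R}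
    (ha : a • ∑ s, q s • e s = ∑ s, q₁ s • e s) (q' : T γ → R) :
    a * D.cellTensor q q' ≡ D.cellTensor q₁ q' [SMOD D.Abar γ] := by
  choose c hc using fun s => D.mult γ s a
  have action : a • ∑ s, q s • e s = ∑ v, (∑ s, q s * c s v) • e v := by
    have basis_action (s : T γ) : a • q s • e s = q s • ∑ v, c s v • e v := by
      rw [smul_algebra_smul_comm, hM.2.2 a s (c s) (hc s)]
    simp only [Finset.smul_sum, basis_action, Finset.sum_smul, smul_smul]
    exact Finset.sum_comm
  have coords : q₁ = fun v => ∑ s, q s * c s v := by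
    refine funext fun v => sub_eq_zero.1 (Fintype.linearIndependent_iff.1 hM.1
      (fun v => q₁ v - ∑ s, q s * c s v) ?_ v)
    simp only [sub_smul, Finset.sum_sub_distrib, ← action, ← ha, sub_self]
  have column (t : T γ) : a * ∑ s, q s • D.c γ s t ≡ ∑ v, q₁ v • D.c γ v t [SMOD D.Abar γ] :=
    calc
      a * ∑ s, q s • D.c γ s t = ∑ s, q s • (a * D.c γ s t) := by
        simp only [Finset.mul_sum, mul_smul_comm]
      _ ≡ ∑ s, q s • ∑ v, c s v • D.c γ v t [SMOD D.Abar γ] :=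
        SModEq.sum fun s _ => (SModEq.sub_mem.2 (hc s t)).smul _
      _ = ∑ v, q₁ v • D.c γ v t := by
        simp only [coords, Finset.smul_sum, smul_smul, Finset.sum_smul]
        exact Finset.sum_comm
  rw [cellTensor_eq_sum_smul, cellTensor_eq_sum_smul, Finset.mul_sum]
  refine SModEq.sum fun t _ => ?_
  rw [mul_smul_comm]
  exact (column t).smul _

lemma cellTensor_mul (hM : IsCellModule D γ M e) {b : A} {q' q₁ : T γ → R}
    (hb : D.star b • ∑ t, q' t • e t = ∑ t, q₁ t • e t) (q : T γ → R) :
    D.cellTensor q q' * b ≡ D.cellTensor q q₁ [SMOD D.Abar γ] :=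
  calc
    D.cellTensor q q' * b = D.star (D.star b * D.star (D.cellTensor q q')) := by
      rw [D.star_mul, D.star_star, D.star_star]
    _ ≡ D.star (D.star b * D.cellTensor q' q) [SMOD D.Abar γ] :=
      D.smodEq_star (D.smodEq_mul_left _ (D.star_cellTensor q q'))
    _ ≡ D.star (D.cellTensor q₁ q) [SMOD D.Abar γ] := D.smodEq_star (D.mul_cellTensor hM hb q)
    _ ≡ D.cellTensor q q₁ [SMOD D.Abar γ] := D.star_cellTensor q₁ q

section Lift

variable {p : T γ → R} {y : A} {vv : T γ → A}

lemma vv_mul_y_smodEq (hM : IsCellModule D γ M e) (hy : y ≡ D.cellTensor p p [SMOD D.Abar γ])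
    (hvv : ∀ t, vv t • ∑ s, p s • e s = e t) (t : T γ) :
    vv t * y ≡ D.cellTensor (Pi.single t 1) p [SMOD D.Abar γ] :=
  (D.smodEq_mul_left _ hy).trans (D.mul_cellTensor hM (by simp [hvv, Pi.single_apply]) p)

lemma cellTensor_mul_star_vv (hM : IsCellModule D γ M e)
    (hvv : ∀ t, vv t • ∑ s, p s • e s = e t) (q : T γ → R) (t : T γ) :
    D.cellTensor q p * D.star (vv t) ≡ D.cellTensor q (Pi.single t 1) [SMOD D.Abar γ] :=
  D.cellTensor_mul hM (by simp [D.star_star, hvv, Pi.single_apply]) q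

lemma c_smodEq (hM : IsCellModule D γ M e) (hy : y ≡ D.cellTensor p p [SMOD D.Abar γ])
    (hvv : ∀ t, vv t • ∑ s, p s • e s = e t) (s t : T γ) :
    D.c γ s t ≡ vv s * y * D.star (vv t) [SMOD D.Abar γ] := by
  rw [← D.cellTensor_single_single]
  exact ((D.smodEq_mul_right _ (D.vv_mul_y_smodEq hM hy hvv s)).trans
    (D.cellTensor_mul_star_vv hM hvv _ t)).symm

lemma mul_y_mem_span_sup_Abar (hM : IsCellModule D γ M e)
    (hy : y ≡ D.cellTensor p p [SMOD D.Abar γ]) (hvv : ∀ t, vv t • ∑ s, p s • e s = e t) (a : A) :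
    a * y ∈ Submodule.span R (Set.range fun t => vv t * y) ⊔ D.Abar γ := by
  obtain ⟨q, hq⟩ := (Submodule.mem_span_range_iff_exists_fun R).1
    (hM.2.1.ge (Submodule.mem_top (x := a • ∑ s, p s • e s)))
  refine mem_span_range_sup_of_smodEq (q := q) ?_
  calc
    a * y ≡ a * D.cellTensor p p [SMOD D.Abar γ] := D.smodEq_mul_left a hy
    _ ≡ D.cellTensor q p [SMOD D.Abar γ] := D.mul_cellTensor hM hq.symm p
    _ = ∑ t, q t • D.cellTensor (Pi.single t 1) p := D.cellTensor_eq_sum_single_left q p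
    _ ≡ ∑ t, q t • (vv t * y) [SMOD D.Abar γ] :=
      SModEq.sum fun t _ => (D.vv_mul_y_smodEq hM hy hvv t).symm.smul _

lemma y_mul_mem_span_sup_Abar (hM : IsCellModule D γ M e)
    (hy : y ≡ D.cellTensor p p [SMOD D.Abar γ]) (hvv : ∀ t, vv t • ∑ s, p s • e s = e t) (b : A) :
    y * b ∈ Submodule.span R (Set.range fun t => y * D.star (vv t)) ⊔ D.Abar γ := by
  obtain ⟨q, hq⟩ := (Submodule.mem_span_range_iff_exists_fun R).1
    (hM.2.1.ge (Submodule.mem_top (x := D.star b • ∑ s, p s • e s)))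
  refine mem_span_range_sup_of_smodEq (q := q) ?_
  calc
    y * b ≡ D.cellTensor p p * b [SMOD D.Abar γ] := D.smodEq_mul_right b hy
    _ ≡ D.cellTensor p q [SMOD D.Abar γ] := D.cellTensor_mul hM hq.symm p
    _ = ∑ t, q t • D.cellTensor p (Pi.single t 1) := D.cellTensor_eq_sum_single_right p q
    _ ≡ ∑ t, q t • (y * D.star (vv t)) [SMOD D.Abar γ] := SModEq.sum fun t _ =>
      ((D.smodEq_mul_right _ hy).trans (D.cellTensor_mul_star_vv hM hvv p t)).symm.smul _

end Lift

lemma Abar_le_span_mul_y_mul [Finite Γ] {y : Γ → A} {vv : (γ : Γ) → T γ → A}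
    (hc : ∀ γ (s t : T γ), D.c γ s t ≡ vv γ s * y γ * D.star (vv γ t) [SMOD D.Abar γ]) (γ : Γ) :
    D.Abar γ ≤ Submodule.span R {x | ∃ γ', γ < γ' ∧ ∃ a b : A, x = a * y γ' * b} := by
  induction γ using (Finite.to_wellFoundedGT (α := Γ)).wf.induction with
  | _ γ ih =>
    refine Submodule.span_le.2 ?_
    rintro _ ⟨μ, hμ, s, t, rfl⟩
    have hlead : vv μ s * y μ * D.star (vv μ t) ∈
        Submodule.span R {x | ∃ γ', γ < γ' ∧ ∃ a b : A, x = a * y γ' * b} :=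
      Submodule.subset_span ⟨μ, hμ, _, _, rfl⟩
    refine (Submodule.sub_mem_iff_left _ hlead).1
      (Submodule.span_mono ?_ (ih μ hμ (SModEq.sub_mem.1 (hc μ s t))))
    exact fun _ ⟨ν, hν, hx⟩ => ⟨ν, hμ.trans hν, hx⟩

/-- The elements `y γ` and `vv γ t` lift generators of the cell modules and the elements carrying
them to the cell basis, in the form used for straightening: modulo `Ā^γ`, the left ideal of `y γ` is
spanned by the `vv γ t * y γ` and the right ideal by the `y γ * (vv γ t)*`, while `Ā^γ` lies in the
two-sided ideal of the `y γ'` with `γ' > γ`. -/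
structure IsCyclicLift (y : Γ → A) (vv : (γ : Γ) → T γ → A) : Prop where
  mul_y_mem γ (a : A) : a * y γ ∈ Submodule.span R (Set.range fun t => vv γ t * y γ) ⊔ D.Abar γ
  y_mul_mem γ (b : A) :
    y γ * b ∈ Submodule.span R (Set.range fun t => y γ * D.star (vv γ t)) ⊔ D.Abar γ
  Abar_le γ : D.Abar γ ≤ Submodule.span R {x | ∃ γ', γ < γ' ∧ ∃ a b : A, x = a * y γ' * b}

lemma isCyclicLift [Finite Γ] {M : Γ → Type*} [∀ γ, AddCommGroup (M γ)] [∀ γ, Module R (M γ)]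
    [∀ γ, Module A (M γ)] [∀ γ, IsScalarTower R A (M γ)] {e : ∀ γ, T γ → M γ}
    (hM : ∀ γ, IsCellModule D γ (M γ) (e γ)) {p : ∀ γ, T γ → R} {y : Γ → A}
    {vv : ∀ γ, T γ → A} (hy : ∀ γ, y γ ≡ D.cellTensor (p γ) (p γ) [SMOD D.Abar γ])
    (hvv : ∀ γ t, vv γ t • ∑ s, p γ s • e γ s = e γ t) : D.IsCyclicLift y vv where
  mul_y_mem γ := D.mul_y_mem_span_sup_Abar (hM γ) (hy γ) (hvv γ)
  y_mul_mem γ := D.y_mul_mem_span_sup_Abar (hM γ) (hy γ) (hvv γ)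
  Abar_le := D.Abar_le_span_mul_y_mul fun γ => D.c_smodEq (hM γ) (hy γ) (hvv γ)

end CellDatum

section Tableaux

variable {r : ℕ} {mu : Fin r → YoungDiagram} {α : Type*}

/-- The labelling of the entries of a tableau by (component, row). Right multiplication of
`d(U)` by the row stabilizer does not change it, and standard tableaux are recovered from it. -/
def rowLabel (U : MCells mu ≃ α) (x : α) : Fin r × ℕ :=
  ((U.symm x).1, ((U.symm x).2 : ℕ × ℕ).1)

lemma rowLabel_apply (U : MCells mu ≃ α) (X : MCells mu) :
    rowLabel U (U X) = (X.1, (X.2 : ℕ × ℕ).1) := by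
  rw [rowLabel, Equiv.symm_apply_apply]

section Count

variable [Fintype α]

lemma card_filter_rowLabel (U : MCells mu ≃ α) (P : Fin r × ℕ → Prop) [DecidablePred P] :
    Finset.card {x | P (rowLabel U x)} = ∑ k, Finset.card {c ∈ (mu k).cells | P (k, c.1)} := by
  rw [← Finset.card_sigma]
  symm
  refine Finset.card_bij
    (fun c hc => U ⟨c.1, c.2, (Finset.mem_filter.1 (Finset.mem_sigma.1 hc).2).1⟩) ?_ ?_ ?_
  · rintro ⟨k, c⟩ hc
    exact Finset.mem_filter.2 ⟨Finset.mem_univ _, (congrArg P (rowLabel_apply U _)).mpr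
      (Finset.mem_filter.1 (Finset.mem_sigma.1 hc).2).2⟩
  · rintro ⟨k, c⟩ hc ⟨k', c'⟩ hc' h
    obtain ⟨hk, hc⟩ := Sigma.mk.inj (U.injective h)
    obtain rfl : k = k' := hk
    rw [show c = c' from Subtype.mk.inj (eq_of_heq hc)]
  · intro x hx
    obtain ⟨⟨k, c, hc⟩, rfl⟩ := U.surjective x
    have hP : P (k, c.1) :=
      (congrArg P (rowLabel_apply U _)).mp (Finset.mem_filter.1 hx).2
    exact ⟨⟨k, c⟩, by simp [hP, (YoungDiagram.mem_cells _).1 hc], rfl⟩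

lemma sum_card_eq_card (U : MCells mu ≃ α) : ∑ k, (mu k).card = Fintype.card α := by
  simpa [YoungDiagram.card] using (card_filter_rowLabel U fun _ => True).symm

lemma card_rowLabel_eq (U : MCells mu ≃ α) (k : Fin r) (i : ℕ) :
    Finset.card {x | rowLabel U x = (k, i)} = (mu k).rowLen i := by
  rw [card_filter_rowLabel U (· = (k, i)), Finset.sum_eq_single_of_mem k (Finset.mem_univ k),
    YoungDiagram.rowLen_eq_card, YoungDiagram.row]
  · simp
  · intro k' _ hk
    simp [hk]

lemma rowsBelow_eq_sum_card (f : α → Fin r × ℕ) (k : Fin r) (j : ℕ) :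
    rowsBelow f k j = ∑ i ∈ Finset.range j, Finset.card {x | f x = (k, i)} := by
  induction j with
  | zero => simp [rowsBelow]
  | succ j ih => rw [rowsBelow_succ, Finset.sum_range_succ, ih]

variable {Γ : Type*} [PartialOrder Γ] (l : Fin r → Γ)

/-- The quantity compared by `Γ`-dominance: the number of labels in components above `k`, or in
the first `j` rows of component `k`. -/
noncomputable def domCount (f : α → Fin r × ℕ) (k : Fin r) (j : ℕ) : ℕ :=
  Finset.card {x | l k < l (f x).1 ∨ (f x).1 = k ∧ (f x).2 < j}

lemma domCount_eq_add (f : α → Fin r × ℕ) (k : Fin r) (j : ℕ) :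
    domCount l f k j = Finset.card {x | l k < l (f x).1} + rowsBelow f k j := by
  rw [domCount, rowsBelow, Finset.filter_or, Finset.card_union_of_disjoint]
  exact Finset.disjoint_filter.2 fun x _ hlt ⟨heq, _⟩ => (heq ▸ hlt).false

lemma domCount_rowLabel (U : MCells mu ≃ α) (k : Fin r) (j : ℕ) :
    domCount l (rowLabel U) k j =
      (∑ k' ∈ Finset.univ.filter (fun k' => l k < l k'), (mu k').card)
        + ∑ i ∈ Finset.range j, (mu k).rowLen i := by
  rw [domCount_eq_add, rowsBelow_eq_sum_card, card_filter_rowLabel U (fun c => l k < l c.1)]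
  congr 1
  · simp [Finset.filter_const, apply_ite Finset.card, Finset.sum_filter, YoungDiagram.card]
  · simp only [card_rowLabel_eq]

variable {l}

lemma domCount_eq_add_of_fst_eq {f f' : α → Fin r × ℕ} (hfst : Prod.fst ∘ f' = Prod.fst ∘ f)
    (k : Fin r) (j : ℕ) :
    domCount l f' k j = Finset.card {x | l k < l (f x).1} + rowsBelow f' k j := by
  have hfst (x : α) : (f' x).1 = (f x).1 := congrFun hfst x
  simp only [domCount_eq_add, hfst]

lemma domCount_mono {f f' : α → Fin r × ℕ} (hfst : Prod.fst ∘ f' = Prod.fst ∘ f)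
    (h : rowsBelow f ≤ rowsBelow f') : domCount l f ≤ domCount l f' := by
  intro k j
  rw [domCount_eq_add, domCount_eq_add_of_fst_eq hfst]
  exact Nat.add_le_add_left (h k j) _

lemma IsRaise.domCount_lt {f f' : α → Fin r × ℕ} (h : IsRaise f f') :
    domCount l f < domCount l f' := by
  refine lt_of_le_of_ne (domCount_mono h.fst_comp h.rowsBelow_lt.le) fun heq => ?_
  refine h.rowsBelow_lt.ne (funext fun k => funext fun j => ?_)
  have hkj := congrFun (congrFun heq k) j
  rwa [domCount_eq_add, domCount_eq_add_of_fst_eq h.fst_comp, Nat.add_left_cancel_iff] at hkj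

lemma domCount_lt_update [DecidableEq α] {f : α → Fin r × ℕ} {i : α} {c : Fin r × ℕ}
    (h : l (f i).1 < l c.1) : domCount l f < domCount l (Function.update f i c) := by
  have hsub (k : Fin r) (j : ℕ) :
      ({x | l k < l (f x).1 ∨ (f x).1 = k ∧ (f x).2 < j} : Finset α) ⊆
        ({x | l k < l (Function.update f i c x).1 ∨
          (Function.update f i c x).1 = k ∧ (Function.update f i c x).2 < j} : Finset α) := by
    refine Finset.monotone_filter_right _ fun x _ hx => ?_
    obtain rfl | hxi := eq_or_ne x i
    · rw [Function.update_self]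
      exact .inl (hx.elim (·.trans h) fun hx => hx.1 ▸ h)
    · rwa [Function.update_of_ne hxi]
  have hne : (f i).1 ≠ c.1 := fun heq => (heq ▸ h).false
  refine Pi.lt_def.2 ⟨fun k j => Finset.card_le_card (hsub k j), c.1,
    Pi.lt_def.2 ⟨fun j => Finset.card_le_card (hsub c.1 j), c.2 + 1, ?_⟩⟩
  exact Finset.card_lt_card <| (Finset.ssubset_iff_of_subset (hsub _ _)).2
    ⟨i, by simp, by simp [h.not_gt, hne]⟩

lemma gDomL_and_ne_of_domCount_lt {lam : Fin r → YoungDiagram} {V : MCells lam ≃ α}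
    {U : MCells mu ≃ α} (h : domCount l (rowLabel V) < domCount l (rowLabel U)) :
    GDomL l mu lam ∧ mu ≠ lam := by
  constructor
  · intro k j
    simpa only [domCount_rowLabel] using h.le k j
  · rintro rfl
    refine h.ne (funext fun k => funext fun j => ?_)
    rw [domCount_rowLabel, domCount_rowLabel]

end Count

section RowPosition

variable {κ : Type*} [DecidableEq κ] [LinearOrder α] [Fintype α] {f : α → κ}

/-- The column in which a row standard filling with row labelling `f` has to place the
entry `x`. -/
def rowPos (f : α → κ) (x : α) : ℕ := Finset.card {z | z < x ∧ f z = f x}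

lemma rowPos_lt_card (f : α → κ) (x : α) : rowPos f x < Finset.card {z | z ≤ x ∧ f z = f x} :=
  Finset.card_lt_card <| Finset.ssubset_iff_of_subset
    (Finset.monotone_filter_right _ fun _ _ hz => ⟨hz.1.le, hz.2⟩) |>.2 ⟨x, by simp, by simp⟩

lemma rowPos_lt_rowPos {x y : α} (hf : f x = f y) (hxy : x < y) : rowPos f x < rowPos f y :=
  (rowPos_lt_card f x).trans_le <| Finset.card_le_card <|
    Finset.monotone_filter_right _ fun _ _ hz => ⟨hz.1.trans_lt hxy, hz.2.trans hf⟩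

lemma eq_of_rowPos_eq {x y : α} (hf : f x = f y) (h : rowPos f x = rowPos f y) : x = y := by
  rcases lt_trichotomy x y with hlt | heq | hgt
  · exact absurd h (rowPos_lt_rowPos hf hlt).ne
  · exact heq
  · exact absurd h (rowPos_lt_rowPos hf.symm hgt).ne'

lemma exists_rowPos_eq_iff {c : κ} {j : ℕ} :
    (∃ x, f x = c ∧ rowPos f x = j) ↔ j < Finset.card {x | f x = c} := by
  have hlt (x : α) (hx : f x = c) : rowPos f x < Finset.card {z | f z = c} :=
    (rowPos_lt_card f x).trans_le <| Finset.card_le_card <|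
      Finset.monotone_filter_right _ fun _ _ hz => hz.2.trans hx
  refine ⟨fun ⟨x, hx, hj⟩ => hj ▸ hlt x hx, fun hj => ?_⟩
  have hsurj := Finset.surjOn_of_injOn_of_card_le (s := {x | f x = c})
    (t := Finset.range (Finset.card {x | f x = c})) (rowPos f)
    (fun x hx => by simpa using hlt x (by simpa using hx))
    (fun x hx y hy => eq_of_rowPos_eq (by simp_all)) (by simp)
  obtain ⟨x, hx, hxj⟩ := hsurj (by simpa using hj)
  exact ⟨x, by simpa using hx, hxj⟩

end RowPosition

section Ballot

variable [LinearOrder α] {f : α → Fin r × ℕ}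

lemma IsBallot.antitone_card (hf : IsBallot f) {s : Finset α} (hs : IsLowerSet (s : Set α))
    (k : Fin r) : Antitone fun i => Finset.card {x ∈ s | f x = (k, i)} :=
  antitone_nat_of_succ_le fun i => hf s hs k i

variable [Fintype α]

lemma IsBallot.le_of_rowPos_le (hf : IsBallot f) {x y : α} (hfst : (f x).1 = (f y).1)
    (hrow : (f x).2 ≤ (f y).2) (hpos : rowPos f x ≤ rowPos f y) : x ≤ y := by
  by_contra! hyx
  have hlower : IsLowerSet (({z | z ≤ y} : Finset α) : Set α) := fun _ _ hle hz => by
    simpa using hle.trans (by simpa using hz)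
  have hlt : rowPos f x < rowPos f x := calc
    rowPos f x ≤ rowPos f y := hpos
    _ < Finset.card {z | z ≤ y ∧ f z = f y} := rowPos_lt_card f y
    _ = Finset.card {z ∈ {z | z ≤ y} | f z = ((f x).1, (f y).2)} := by
      rw [Finset.filter_filter, hfst]
    _ ≤ Finset.card {z ∈ {z | z ≤ y} | f z = ((f x).1, (f x).2)} :=
      hf.antitone_card hlower (f x).1 hrow
    _ ≤ rowPos f x := by
      rw [Finset.filter_filter]
      exact Finset.card_le_card <|
        Finset.monotone_filter_right _ fun z _ hz => ⟨hz.1.trans_lt hyx, hz.2⟩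
  exact hlt.false

lemma IsBallot.exists_rowLen_eq (hf : IsBallot f) :
    ∃ mu : Fin r → YoungDiagram, ∀ k i, Finset.card {x | f x = (k, i)} = (mu k).rowLen i := by
  have hmem (k : Fin r) (i j : ℕ) :
      (i, j) ∈ Finset.image (fun x => ((f x).2, rowPos f x)) {x | (f x).1 = k} ↔
        j < Finset.card {x | f x = (k, i)} := by
    rw [← exists_rowPos_eq_iff]
    simp [Prod.ext_iff, and_assoc]
  refine ⟨fun k => ⟨Finset.image (fun x => ((f x).2, rowPos f x)) {x | (f x).1 = k}, ?_⟩, ?_⟩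
  · rintro ⟨i, j⟩ ⟨i', j'⟩ ⟨hi, hj⟩ hij
    rw [Finset.mem_coe, hmem] at hij ⊢
    exact (lt_of_le_of_lt hj hij).trans_le
      (hf.antitone_card (s := Finset.univ) (by simp [isLowerSet_univ]) k hi)
  · intro k i
    refine eq_of_forall_lt_iff fun j => ?_
    rw [← YoungDiagram.mem_iff_lt_rowLen, ← YoungDiagram.mem_cells, hmem]

end Ballot

lemma IsBallot.exists_isStdTableau {n : ℕ} {f : Fin n → Fin r × ℕ} (hf : IsBallot f)
    (hmu : ∀ k i, Finset.card {x | f x = (k, i)} = (mu k).rowLen i) :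
    ∃ U : MCells mu ≃ Fin n, IsStdTableau U ∧ rowLabel U = f := by
  have hcell (k : Fin r) (c : ℕ × ℕ) :
      c ∈ (mu k).cells ↔ ∃ x, f x = (k, c.1) ∧ rowPos f x = c.2 := by
    rw [exists_rowPos_eq_iff, hmu, YoungDiagram.mem_cells, YoungDiagram.mem_iff_lt_rowLen]
  let V : Fin n → MCells mu := fun x =>
    ⟨(f x).1, ((f x).2, rowPos f x), (hcell _ _).2 ⟨x, rfl, rfl⟩⟩
  have hV : V.Bijective := by
    constructor
    · intro x y hxy
      refine eq_of_rowPos_eq (f := f) (Prod.ext ?_ ?_) ?_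
      · exact congrArg (fun X : MCells mu => X.1) hxy
      · exact congrArg (fun X : MCells mu => (X.2 : ℕ × ℕ).1) hxy
      · exact congrArg (fun X : MCells mu => (X.2 : ℕ × ℕ).2) hxy
    · rintro ⟨k, ⟨i, j⟩, hc⟩
      obtain ⟨x, hfx, rfl⟩ := (hcell k (i, j)).1 hc
      obtain ⟨rfl, rfl⟩ := Prod.ext_iff.1 hfx
      exact ⟨x, rfl⟩
  refine ⟨(Equiv.ofBijective V hV).symm, fun X Y hfst hrow hcol hne => ?_, rfl⟩
  obtain ⟨x, rfl⟩ := (Equiv.ofBijective V hV).surjective X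
  obtain ⟨y, rfl⟩ := (Equiv.ofBijective V hV).surjective Y
  rw [Equiv.symm_apply_apply, Equiv.symm_apply_apply]
  exact (hf.le_of_rowPos_le hfst hrow hcol).lt_of_ne fun hxy => hne (congrArg _ hxy)

lemma exists_isSuperstandard {n : ℕ} (U : MCells mu ≃ Fin n) :
    ∃ tm : MCells mu ≃ Fin n, IsSuperstandard tm := by
  let key : MCells mu → Fin r ×ₗ ℕ ×ₗ ℕ := fun X => toLex (X.1, toLex (X.2 : ℕ × ℕ))
  have hkey : key.Injective := by
    rintro ⟨k, c, hc⟩ ⟨k', c', hc'⟩ h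
    obtain ⟨rfl, h⟩ := Prod.mk.inj (toLex.injective h)
    obtain rfl := toLex.injective h
    rfl
  let _ : LinearOrder (MCells mu) := LinearOrder.lift' key hkey
  have hcard : Fintype.card (MCells mu) = n := by rw [Fintype.card_congr U, Fintype.card_fin]
  refine ⟨(Fintype.orderIsoFinOfCardEq (MCells mu) hcard).symm.toEquiv, fun X Y => ?_⟩
  calc
    _ ↔ key X ≤ key Y := (Fintype.orderIsoFinOfCardEq (MCells mu) hcard).symm.le_iff_le
    _ ↔ _ := by simp only [key, Prod.Lex.toLex_le_toLex]

end Tableaux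

section Multilinear

variable {R ι W : Type*} {E : ι → Type*} [CommRing R] [Finite ι] [DecidableEq ι]
  [∀ i, AddCommGroup (E i)] [∀ i, Module R (E i)] [AddCommGroup W] [Module R W]

/- Replace the coordinates by elements of `G i` one at a time; the error terms created on the way
have one coordinate in `B i` and are discarded. -/
lemma multilinearMap_mem_of_subset_span_sup (Φ : MultilinearMap R E W) {N : Submodule R W}
    {P G : ∀ i, Set (E i)} {B : ∀ i, Submodule R (E i)} (hGP : ∀ i, G i ⊆ P i)
    (hP : ∀ i, ∀ z ∈ P i, z ∈ Submodule.span R (G i) ⊔ B i)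
    (hG : ∀ c, (∀ i, c i ∈ G i) → Φ c ∈ N)
    (hB : ∀ c, (∀ i, c i ∈ P i) → ∀ i, ∀ z ∈ B i, Φ (Function.update c i z) ∈ N)
    {c : ∀ i, E i} (hc : ∀ i, c i ∈ P i) : Φ c ∈ N := by
  have := Fintype.ofFinite ι
  suffices H : ∀ s : Finset ι, ∀ c, (∀ i, c i ∈ P i) → (∀ i ∉ s, c i ∈ G i) → Φ c ∈ N from
    H Finset.univ c hc fun i hi => absurd (Finset.mem_univ i) hi
  intro s
  induction s using Finset.induction_on with
  | empty => exact fun c _ hcG => hG c fun i => hcG i (Finset.notMem_empty i)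
  | insert i s _ ih =>
    intro c hcP hcG
    have hle : Submodule.span R (G i) ⊔ B i ≤ N.comap (Φ.toLinearMap c i) := by
      refine sup_le (Submodule.span_le.2 fun z hz => ih _ ?_ ?_) (hB c hcP i)
      · exact (Function.forall_update_iff c fun x w => w ∈ P x).2 ⟨hGP i hz, fun x _ => hcP x⟩
      · intro x hxs
        obtain rfl | hxi := eq_or_ne x i
        · simpa using hz
        · simpa [hxi] using hcG x (by simp [hxi, hxs])
    simpa using hle (hP i _ (hcP i))

end Multilinear

section TensorFactors

variable {A : Type*} {n r : ℕ} {Γ : Type*} {T : Γ → Type*} {mu : Fin r → YoungDiagram}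
  (y : Γ → A) (vv : (γ : Γ) → T γ → A) (l : Fin r → Γ)

/-- The tensor factors of `y^α`, for the components prescribed by a labelling. -/
def yVec (f : Fin n → Fin r × ℕ) (x : Fin n) : A := y (l (f x).1)

lemma yVec_update (f : Fin n → Fin r × ℕ) (i : Fin n) (c : Fin r × ℕ) :
    yVec y l (Function.update f i c) = Function.update (yVec y l f) i (y (l c.1)) :=
  Function.comp_update (fun c : Fin r × ℕ => y (l c.1)) f i c

lemma yVec_eq_of_fst_eq {f f' : Fin n → Fin r × ℕ} (hfst : Prod.fst ∘ f' = Prod.fst ∘ f) :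
    yVec y l f' = yVec y l f :=
  congrArg (fun k : Fin n → Fin r => y ∘ l ∘ k) hfst

/-- The tensor factors of `d(U) v d(U)⁻¹`, where `v ∈ V^α` is given by the labelling `τ` of
cells. -/
def vVec (U : MCells mu ≃ Fin n) (τ : ∀ X : MCells mu, T (l X.1)) (x : Fin n) : A :=
  vv (l (U.symm x).1) (τ (U.symm x))

variable {vv l} in
lemma exists_vVec_eq {U : MCells mu ≃ Fin n} {v : Fin n → A}
    (hv : ∀ x, v x ∈ Set.range (vv (l (rowLabel U x).1))) : ∃ τ, vVec vv l U τ = v := by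
  have hcell (X : MCells mu) : v (U X) ∈ Set.range (vv (l X.1)) :=
    (congrArg (fun c : Fin r × ℕ => Set.range (vv (l c.1))) (rowLabel_apply U X)).le (hv (U X))
  choose τ hτ using hcell
  exact ⟨τ, funext fun x => by rw [vVec, hτ, Equiv.apply_symm_apply]⟩

variable (tm U : MCells mu ≃ Fin n)

lemma rowLabel_comp_dperm_inv : rowLabel tm ∘ ⇑(dperm tm U)⁻¹ = rowLabel U := by
  funext x
  exact rowLabel_apply tm (U.symm x)

lemma vVec_comp_dperm_inv (τ : ∀ X : MCells mu, T (l X.1)) :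
    vVec vv l tm τ ∘ ⇑(dperm tm U)⁻¹ = vVec vv l U τ :=
  funext fun x => congrArg (fun X => vv (l X.1) (τ X)) (tm.symm_apply_apply (U.symm x))

end TensorFactors

section WreathSum

variable {R : Type*} [CommRing R] {A : Type*} [Ring A] [Algebra R A]
  {n : ℕ} {W : Type*} [Ring W] [Algebra R W]
  {φ : ((⨂[R] _ : Fin n, A) ⊗[R] (Equiv.Perm (Fin n) →₀ R)) ≃ₗ[R] W}

/-- The linear isomorphism `φ` carries the product of the wreath product `A ≀ 𝔖_n` to that
of `W`. -/
structure IsWreathProduct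
    (φ : ((⨂[R] _ : Fin n, A) ⊗[R] (Equiv.Perm (Fin n) →₀ R)) ≃ₗ[R] W) : Prop where
  one : wm φ (fun _ => (1 : A)) 1 = 1
  mul (a b : Fin n → A) (π σ : Equiv.Perm (Fin n)) :
    wm φ a π * wm φ b σ = wm φ (fun i => a i * b (π⁻¹ i)) (π * σ)

namespace IsWreathProduct

lemma wm_mul_wm_one (hφ : IsWreathProduct φ) (a b : Fin n → A) :
    wm φ a 1 * wm φ b 1 = wm φ (a * b) 1 := hφ.mul a b 1 1

lemma sElt_mul (hφ : IsWreathProduct φ) (π σ : Equiv.Perm (Fin n)) :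
    sElt φ (π * σ) = sElt φ π * sElt φ σ := by
  simp only [sElt, hφ.mul, mul_one]

lemma sElt_mul_wm (hφ : IsWreathProduct φ) (π : Equiv.Perm (Fin n)) (a : Fin n → A) :
    sElt φ π * wm φ a 1 = wm φ (a ∘ ⇑π⁻¹) 1 * sElt φ π := by
  simp only [sElt, hφ.mul, mul_one, one_mul, Function.comp_def]

lemma wm_mul_sElt (hφ : IsWreathProduct φ) (a : Fin n → A) (π : Equiv.Perm (Fin n)) :
    wm φ a 1 * sElt φ π = sElt φ π * wm φ (a ∘ π) 1 := by
  rw [hφ.sElt_mul_wm, Function.comp_assoc, ← Equiv.Perm.coe_mul, mul_inv_cancel,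
    Equiv.Perm.coe_one, Function.comp_id]

end IsWreathProduct

variable {κ : Type*}

lemma sElt_mul_labelSum (hφ : IsWreathProduct φ) (π : Equiv.Perm (Fin n)) (f h : Fin n → κ) :
    sElt φ π * labelSum (sElt φ) f h = labelSum (sElt φ) (f ∘ ⇑π⁻¹) h := by
  rw [labelSum, labelSum, Finset.mul_sum]
  refine Finset.sum_equiv (Equiv.mulLeft π) (fun g => ?_) fun g _ => (hφ.sElt_mul π g).symm
  simp [Function.comp_def]

lemma labelSum_mul_sElt (hφ : IsWreathProduct φ) (π : Equiv.Perm (Fin n)) (f h : Fin n → κ) :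
    labelSum (sElt φ) f h * sElt φ π = labelSum (sElt φ) f (h ∘ π) := by
  rw [labelSum, labelSum, Finset.sum_mul]
  refine Finset.sum_equiv (Equiv.mulRight π) (fun g => ?_) fun g _ => (hφ.sElt_mul g π).symm
  simp [← Function.comp_assoc, π.surjective.injective_comp_right.eq_iff]

lemma wm_mul_labelSum (hφ : IsWreathProduct φ) (z : κ → A) (f h : Fin n → κ) :
    wm φ (z ∘ f) 1 * labelSum (sElt φ) f h = labelSum (sElt φ) f h * wm φ (z ∘ h) 1 := by
  rw [labelSum, Finset.mul_sum, Finset.sum_mul]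
  refine Finset.sum_congr rfl fun g hg => ?_
  rw [hφ.wm_mul_sElt, Function.comp_assoc, (Finset.mem_filter.1 hg).2]

variable (φ) in
/-- The sum of the elements `c g d` of `A ≀ 𝔖_n`, where `c, d ∈ A^{⊗n}` are pure tensors and `g`
runs over the permutations carrying the labelling `h` to the labelling `f`. -/
noncomputable def wreathSum (c d : Fin n → A) (f h : Fin n → κ) : W :=
  wm φ c 1 * labelSum (sElt φ) f h * wm φ d 1

lemma wreathSum_eq_labelSum (c d : Fin n → A) (f h : Fin n → κ) :
    wreathSum φ c d f h = labelSum (fun g => wm φ c 1 * sElt φ g * wm φ d 1) f h := by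
  simp only [wreathSum, labelSum, Finset.mul_sum, Finset.sum_mul]

lemma wreathSum_mul_comp (hφ : IsWreathProduct φ) (c d : Fin n → A) (z : κ → A)
    (f h : Fin n → κ) :
    wreathSum φ (c * z ∘ f) d f h = wreathSum φ c (z ∘ h * d) f h := by
  rw [wreathSum, wreathSum, ← hφ.wm_mul_wm_one, ← hφ.wm_mul_wm_one, mul_assoc (wm φ c 1),
    wm_mul_labelSum hφ, mul_assoc, mul_assoc, mul_assoc]

section FreshLabel

variable {f h : Fin n → κ} {c₀ : κ}

lemma wreathSum_update_mul_left (hφ : IsWreathProduct φ) (hf : ∀ x, f x ≠ c₀)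
    (hh : ∀ x, h x ≠ c₀) (c d : Fin n → A) (i : Fin n) (u w : A) :
    wreathSum φ (Function.update c i (u * w)) d f h =
      ∑ j with h j = f i, wreathSum φ (Function.update c i u) (Function.update d j (w * d j))
        (Function.update f i c₀) (Function.update h j c₀) := by
  have hc : Function.update c i (u * w) = Function.update c i u *
      Function.update (1 : κ → A) c₀ w ∘ Function.update f i c₀ := by
    rw [update_one_comp_update hf, ← Function.update_mul, mul_one]
  have hd (j : Fin n) : Function.update (1 : κ → A) c₀ w ∘ Function.update h j c₀ * d =
      Function.update d j (w * d j) := by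
    rw [update_one_comp_update hh]
    funext x
    obtain rfl | hx := eq_or_ne x j <;> simp [*]
  rw [wreathSum_eq_labelSum, labelSum_eq_sum_update_left _ h i hf, hc]
  refine Finset.sum_congr rfl fun j _ => ?_
  rw [← wreathSum_eq_labelSum, wreathSum_mul_comp hφ, hd]

lemma wreathSum_update_mul_right (hφ : IsWreathProduct φ) (hf : ∀ x, f x ≠ c₀)
    (hh : ∀ x, h x ≠ c₀) (c d : Fin n → A) (j : Fin n) (u w : A) :
    wreathSum φ c (Function.update d j (u * w)) f h =
      ∑ i with f i = h j, wreathSum φ (Function.update c i (c i * u)) (Function.update d j w)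
        (Function.update f i c₀) (Function.update h j c₀) := by
  have hd : Function.update d j (u * w) =
      Function.update (1 : κ → A) c₀ u ∘ Function.update h j c₀ * Function.update d j w := by
    rw [update_one_comp_update hh, ← Function.update_mul, one_mul]
  have hc (i : Fin n) : c * Function.update (1 : κ → A) c₀ u ∘ Function.update f i c₀ =
      Function.update c i (c i * u) := by
    rw [update_one_comp_update hf]
    funext x
    obtain rfl | hx := eq_or_ne x i <;> simp [*]
  rw [wreathSum_eq_labelSum, labelSum_eq_sum_update_right _ f j hh, hd]
  refine Finset.sum_congr rfl fun i _ => ?_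
  rw [← wreathSum_eq_labelSum, ← wreathSum_mul_comp hφ, hc]

end FreshLabel

section Linear

variable (φ) in
/-- `wm φ a π` as a multilinear map in `a`. -/
noncomputable def wmMultilinear (π : Equiv.Perm (Fin n)) :
    MultilinearMap R (fun _ : Fin n => A) W :=
  (φ.toLinearMap ∘ₗ (TensorProduct.mk R (⨂[R] _ : Fin n, A) (Equiv.Perm (Fin n) →₀ R)).flip
    (Finsupp.single π 1)).compMultilinearMap (PiTensorProduct.tprod R)

variable (φ) in
/-- `wreathSum φ c d f h` as a multilinear map in `c`. -/
noncomputable def wreathSumLeft (d : Fin n → A) (f h : Fin n → κ) :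
    MultilinearMap R (fun _ : Fin n => A) W :=
  (LinearMap.mulRight R (wm φ d 1) ∘ₗ
    LinearMap.mulRight R (labelSum (sElt φ) f h)).compMultilinearMap (wmMultilinear φ 1)

variable (φ) in
/-- `wreathSum φ c d f h` as a multilinear map in `d`. -/
noncomputable def wreathSumRight (c : Fin n → A) (f h : Fin n → κ) :
    MultilinearMap R (fun _ : Fin n => A) W :=
  (LinearMap.mulLeft R (wm φ c 1 * labelSum (sElt φ) f h)).compMultilinearMap (wmMultilinear φ 1)

lemma wreathSumLeft_apply (c d : Fin n → A) (f h : Fin n → κ) :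
    wreathSumLeft φ d f h c = wreathSum φ c d f h := rfl

lemma wreathSumRight_apply (c d : Fin n → A) (f h : Fin n → κ) :
    wreathSumRight φ c f h d = wreathSum φ c d f h := rfl

end Linear

section Tableau

variable {r : ℕ} {Γ : Type*} {T : Γ → Type*} {mu : Fin r → YoungDiagram}
  (y : Γ → A) (vv : (γ : Γ) → T γ → A) (l : Fin r → Γ) (tm U U' : MCells mu ≃ Fin n)

lemma wreathSum_mul_yVec (hφ : IsWreathProduct φ) (a b : Fin n → A) (f h : Fin n → Fin r × ℕ) :
    wreathSum φ (a * yVec y l f) b f h = wreathSum φ a (yVec y l h * b) f h :=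
  wreathSum_mul_comp hφ a b (fun c : Fin r × ℕ => y (l c.1)) f h

lemma xlamElt_eq_labelSum : xlamElt φ tm = labelSum (sElt φ) (rowLabel tm) (rowLabel tm) := by
  refine Finset.sum_congr (Finset.ext fun g => ?_) fun _ _ => rfl
  simp only [rowStab, Finset.mem_filter, Finset.mem_univ, true_and, funext_iff,
    tm.surjective.forall, Function.comp_apply, rowLabel_apply, Prod.ext_iff]
  rfl

lemma sElt_mul_sElt_dperm (hφ : IsWreathProduct φ) (π : Equiv.Perm (Fin n)) :
    sElt φ π * sElt φ (dperm tm U) = sElt φ (dperm tm (U.trans π)) :=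
  (hφ.sElt_mul _ _).symm

lemma sElt_mul_vElt_mul_eq_wreathSum (hφ : IsWreathProduct φ)
    (τ : ∀ X : MCells mu, T (l X.1)) :
    sElt φ (dperm tm U) * vElt φ vv l tm τ * yaElt φ y l tm * xlamElt φ tm =
      wreathSum φ (vVec vv l U τ * yVec y l (rowLabel U)) 1 (rowLabel U) (rowLabel tm) := by
  have hv : vElt φ vv l tm τ = wm φ (vVec vv l tm τ) 1 := rfl
  have hy : yaElt φ y l tm = wm φ (yVec y l (rowLabel tm)) 1 := rfl
  have hyU : yVec y l (rowLabel tm) ∘ ⇑(dperm tm U)⁻¹ = yVec y l (rowLabel U) := by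
    rw [← rowLabel_comp_dperm_inv tm U]; rfl
  have hone : wm φ (1 : Fin n → A) 1 = 1 := hφ.one
  rw [hv, hy, hφ.sElt_mul_wm, mul_assoc (wm φ _ 1), hφ.sElt_mul_wm, xlamElt_eq_labelSum,
    vVec_comp_dperm_inv, hyU, ← mul_assoc, hφ.wm_mul_wm_one, mul_assoc, sElt_mul_labelSum hφ,
    rowLabel_comp_dperm_inv, wreathSum, hone, mul_one]

lemma mwElt_eq_wreathSum [PartialOrder Γ] [∀ γ, Fintype (T γ)] (D : CellDatum R A Γ T)
    (hφ : IsWreathProduct φ) (starW : W →ₗ[R] W)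
    (hsw : ∀ (a : Fin n → A) (π : Equiv.Perm (Fin n)),
      starW (wm φ a π) = wm φ (fun i => D.star (a (π i))) π⁻¹)
    (τ τ' : ∀ X : MCells mu, T (l X.1)) :
    mwElt φ starW y vv l tm U U' τ τ' =
      wreathSum φ (vVec vv l U τ * yVec y l (rowLabel U)) (D.star ∘ vVec vv l U' τ')
        (rowLabel U) (rowLabel U') := by
  have hstar_v : starW (vElt φ vv l tm τ') = wm φ (D.star ∘ vVec vv l tm τ') 1 := hsw _ _
  have hstar_s : starW (sElt φ (dperm tm U')) = sElt φ (dperm tm U')⁻¹ := by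
    rw [sElt, hsw, D.star_one, sElt]
  have hone : wm φ (1 : Fin n → A) 1 = 1 := hφ.one
  rw [mwElt, sElt_mul_vElt_mul_eq_wreathSum y vv l tm U hφ, hstar_v, hstar_s, wreathSum, hone,
    mul_one, mul_assoc, hφ.wm_mul_sElt, Function.comp_assoc, vVec_comp_dperm_inv, ← mul_assoc,
    mul_assoc (wm φ _ 1), labelSum_mul_sElt hφ, rowLabel_comp_dperm_inv, wreathSum]

end Tableau

end WreathSum

section WreathStraightening

variable {α : Type*} {r : ℕ} {mu : Fin r → YoungDiagram}

lemma exists_fresh_label [Finite α] (f h : α → Fin r × ℕ) (k : Fin r) :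
    ∃ c : Fin r × ℕ, c.1 = k ∧ (∀ x, f x ≠ c) ∧ ∀ x, h x ≠ c := by
  obtain ⟨i, hi⟩ := ((Set.finite_range (Prod.snd ∘ f)).union
    (Set.finite_range (Prod.snd ∘ h))).exists_notMem
  refine ⟨(k, i), rfl, fun x hx => hi (Or.inl ⟨x, ?_⟩), fun x hx => hi (Or.inr ⟨x, ?_⟩)⟩
  all_goals simp [hx]

variable {R A : Type*} [CommRing R] [Ring A] [Algebra R A] {Γ : Type*} [PartialOrder Γ]
  {T : Γ → Type*} [∀ γ, Fintype (T γ)] {n : ℕ} {W : Type*} [Ring W] [Algebra R W]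
  {φ : ((⨂[R] _ : Fin n, A) ⊗[R] (Equiv.Perm (Fin n) →₀ R)) ≃ₗ[R] W} {D : CellDatum R A Γ T}
  {y : Γ → A} {vv : (γ : Γ) → T γ → A} {l : Fin r → Γ}

section Reduction

variable {f h : Fin n → Fin r × ℕ} {N : Submodule R W}

variable (hφ : IsWreathProduct φ) (hD : D.IsCyclicLift y vv) (hl : Function.Surjective l)
  (hN : ∀ i j c a b, l (f i).1 < l c.1 → wreathSum φ (a * yVec y l (Function.update f i c)) b
    (Function.update f i c) (Function.update h j c) ∈ N)
include hφ hD hl hN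

lemma wreathSum_update_left_mem {i : Fin n} {z : A} (hz : z ∈ D.Abar (l (f i).1))
    (a b : Fin n → A) :
    wreathSum φ (Function.update (a * yVec y l f) i z) b f h ∈ N := by
  suffices hle : D.Abar (l (f i).1) ≤
      N.comap ((wreathSumLeft φ b f h).toLinearMap (a * yVec y l f) i) from hle hz
  refine (hD.Abar_le _).trans (Submodule.span_le.2 ?_)
  rintro _ ⟨γ, hγ, u, w, rfl⟩
  obtain ⟨k, rfl⟩ := hl γ
  obtain ⟨c, rfl, hfc, hhc⟩ := exists_fresh_label f h k
  have hu : Function.update (a * yVec y l f) i (u * y (l c.1)) =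
      Function.update a i u * yVec y l (Function.update f i c) := by
    rw [yVec_update, Function.update_mul]
  change wreathSum φ (Function.update (a * yVec y l f) i _) b f h ∈ N
  rw [wreathSum_update_mul_left hφ hfc hhc, hu]
  exact sum_mem fun j _ => hN i j c _ _ hγ

lemma wreathSum_update_right_mem {j : Fin n} {z : A} (hz : z ∈ D.Abar (l (h j).1))
    (a b : Fin n → A) :
    wreathSum φ a (Function.update (yVec y l h * b) j z) f h ∈ N := by
  suffices hle : D.Abar (l (h j).1) ≤
      N.comap ((wreathSumRight φ a f h).toLinearMap (yVec y l h * b) j) from hle hz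
  refine (hD.Abar_le _).trans (Submodule.span_le.2 ?_)
  rintro _ ⟨γ, hγ, u, w, rfl⟩
  obtain ⟨k, rfl⟩ := hl γ
  obtain ⟨c, rfl, hfc, hhc⟩ := exists_fresh_label f h k
  have hw : Function.update (yVec y l h * b) j (y (l c.1) * w) =
      yVec y l (Function.update h j c) * Function.update b j w := by
    rw [yVec_update, Function.update_mul]
  change wreathSum φ a (Function.update (yVec y l h * b) j _) f h ∈ N
  rw [mul_assoc, wreathSum_update_mul_right hφ hfc hhc, hw]
  refine sum_mem fun i hi => ?_
  have hij : f i = h j := by simpa using hi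
  rw [← wreathSum_mul_yVec y l hφ]
  exact hN i j c _ _ (hij ▸ hγ)

lemma wreathSum_mem_of_forall_vv_left {b : Fin n → A}
    (hgood : ∀ v : Fin n → A, (∀ i, v i ∈ Set.range (vv (l (f i).1))) →
      wreathSum φ (v * yVec y l f) b f h ∈ N) (a : Fin n → A) :
    wreathSum φ (a * yVec y l f) b f h ∈ N := by
  rw [← wreathSumLeft_apply]
  refine multilinearMap_mem_of_subset_span_sup (wreathSumLeft φ b f h)
    (P := fun i => Set.range (· * yVec y l f i))
    (G := fun i => Set.range fun t => vv (l (f i).1) t * yVec y l f i)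
    (B := fun i => D.Abar (l (f i).1)) ?_ ?_ (fun c hc => ?_) (fun c hc i z hz => ?_)
    fun i => Set.mem_range_self (a i)
  · rintro i _ ⟨t, rfl⟩
    exact Set.mem_range_self _
  · rintro i _ ⟨u, rfl⟩
    exact hD.mul_y_mem _ u
  · choose t ht using hc
    obtain rfl : (fun i => vv _ (t i)) * yVec y l f = c := funext ht
    exact hgood _ fun i => Set.mem_range_self (t i)
  · choose u hu using hc
    obtain rfl : u * yVec y l f = c := funext hu
    exact wreathSum_update_left_mem hφ hD hl hN hz u b

lemma wreathSum_mem_of_forall_vv_right {a : Fin n → A}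
    (hgood : ∀ v : Fin n → A, (∀ i, v i ∈ Set.range (vv (l (h i).1))) →
      wreathSum φ (a * yVec y l f) (D.star ∘ v) f h ∈ N) (b : Fin n → A) :
    wreathSum φ (a * yVec y l f) b f h ∈ N := by
  rw [wreathSum_mul_yVec y l hφ, ← wreathSumRight_apply]
  refine multilinearMap_mem_of_subset_span_sup (wreathSumRight φ a f h)
    (P := fun i => Set.range (yVec y l h i * ·))
    (G := fun i => Set.range fun t => yVec y l h i * D.star (vv (l (h i).1) t))
    (B := fun i => D.Abar (l (h i).1)) ?_ ?_ (fun c hc => ?_) (fun c hc i z hz => ?_)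
    fun i => Set.mem_range_self (b i)
  · rintro i _ ⟨t, rfl⟩
    exact Set.mem_range_self _
  · rintro i _ ⟨w, rfl⟩
    exact hD.y_mul_mem _ w
  · choose t ht using hc
    obtain rfl : yVec y l h * D.star ∘ (fun i => vv _ (t i)) = c := funext ht
    rw [wreathSumRight_apply, ← wreathSum_mul_yVec y l hφ]
    exact hgood _ fun i => Set.mem_range_self (t i)
  · choose w hw using hc
    obtain rfl : yVec y l h * w = c := funext hw
    exact wreathSum_update_right_mem hφ hD hl hN hz a w

end Reduction

variable (φ y vv l) in
/-- The span of the elements `m^λ_{(u,v),(t^λ,1)}` with `u` a standard `λ`-tableau and `v ∈ V^α`,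
relative to the tableau `tl` in place of `t^λ`. -/
def murphySpan {lam : Fin r → YoungDiagram} (tl : MCells lam ≃ Fin n) : Submodule R W :=
  Submodule.span R
    {x : W | ∃ (U : MCells lam ≃ Fin n) (τ : ∀ x : MCells lam, T (l x.1)), IsStdTableau U ∧
      x = sElt φ (dperm tl U) * vElt φ vv l tl τ * yaElt φ y l tl * xlamElt φ tl}

variable (φ y vv l) in
/-- The module `N̄^λ`, spanned by the elements `m^μ_{(s,v),(t,w)}` with `μ ▷_Γ λ`. -/
def dominatingSpan (starW : W →ₗ[R] W) (lam : Fin r → YoungDiagram) : Submodule R W :=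
  Submodule.span R
    {x : W | ∃ mu : Fin r → YoungDiagram, (∑ k, (mu k).card = n) ∧ GDomL l mu lam ∧ mu ≠ lam ∧
      ∃ (tm : MCells mu ≃ Fin n), IsSuperstandard tm ∧
      ∃ (U U' : MCells mu ≃ Fin n), IsStdTableau U ∧ IsStdTableau U' ∧
      ∃ (τu τu' : ∀ x : MCells mu, T (l x.1)), x = mwElt φ starW y vv l tm U U' τu τu'}

variable {lam : Fin r → YoungDiagram} {starW : W →ₗ[R] W}

section DominatingSpan

variable (hφ : IsWreathProduct φ) (hD : D.IsCyclicLift y vv) (hl : Function.Surjective l)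
  (hsw : ∀ (a : Fin n → A) (π : Equiv.Perm (Fin n)),
    starW (wm φ a π) = wm φ (fun i => D.star (a (π i))) π⁻¹)
include hφ hD hl hsw

lemma wreathSum_rowLabel_mem_dominatingSpan {V : MCells lam ≃ Fin n} {U U' : MCells mu ≃ Fin n}
    (hU : IsStdTableau U) (hU' : IsStdTableau U')
    (hdom : domCount l (rowLabel V) < domCount l (rowLabel U))
    (hN : ∀ i j c a b, l (rowLabel U i).1 < l c.1 →
      wreathSum φ (a * yVec y l (Function.update (rowLabel U) i c)) b
        (Function.update (rowLabel U) i c) (Function.update (rowLabel U') j c) ∈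
        dominatingSpan φ y vv l starW lam)
    (a b : Fin n → A) :
    wreathSum φ (a * yVec y l (rowLabel U)) b (rowLabel U) (rowLabel U') ∈
      dominatingSpan φ y vv l starW lam := by
  refine wreathSum_mem_of_forall_vv_left hφ hD hl hN (fun v hv => ?_) a
  refine wreathSum_mem_of_forall_vv_right hφ hD hl hN (fun v' hv' => ?_) b
  obtain ⟨τ, rfl⟩ := exists_vVec_eq hv
  obtain ⟨τ', rfl⟩ := exists_vVec_eq hv'
  obtain ⟨tm, htm⟩ := exists_isSuperstandard U
  obtain ⟨hdom, hne⟩ := gDomL_and_ne_of_domCount_lt hdom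
  rw [← mwElt_eq_wreathSum y vv l tm U U' D hφ starW hsw]
  exact Submodule.subset_span ⟨mu, (sum_card_eq_card U).trans (Fintype.card_fin n), hdom, hne,
    tm, htm, U, U', hU, hU', τ, τ', rfl⟩

/- Induction on the `Γ`-component of the labelling: a coordinate of `a * yVec y l f` that leaves the
span of the `vv`-multiples falls into `Ā^γ`, hence moves to a larger component. -/
lemma wreathSum_mem_dominatingSpan (V : MCells lam ≃ Fin n) (a b : Fin n → A)
    (f h : Fin n → Fin r × ℕ) (hdom : domCount l (rowLabel V) < domCount l f) :
    wreathSum φ (a * yVec y l f) b f h ∈ dominatingSpan φ y vv l starW lam := by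
  have : Finite Γ := Finite.of_surjective l hl
  induction hk : l ∘ Prod.fst ∘ f using WellFoundedGT.induction generalizing a b f h with
  | ind k ih =>
    subst hk
    rw [wreathSum_eq_labelSum]
    refine labelSum_mem_of_isBallot f h fun f' h' hf' hh' hfst _ hle => ?_
    refine labelSum_mem_of_comp_eq fun g hg => ?_
    obtain ⟨mu, hmu⟩ := hf'.exists_rowLen_eq
    obtain ⟨U', hU', rfl⟩ := hh'.exists_isStdTableau (mu := mu) fun k i =>
      (card_filter_eq_of_comp_eq hg (k, i)).trans (hmu k i)
    obtain ⟨U, hU, rfl⟩ := hf'.exists_isStdTableau hmu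
    replace hdom := hdom.trans_le (domCount_mono hfst hle)
    rw [← wreathSum_eq_labelSum, ← yVec_eq_of_fst_eq y l hfst]
    refine wreathSum_rowLabel_mem_dominatingSpan hφ hD hl hsw hU hU' hdom
      (fun i j c a b hc => ih _ ?_ a b _ _ (hdom.trans (domCount_lt_update hc)) rfl) a b
    rw [← hfst, ← Function.comp_assoc, ← Function.comp_assoc, Function.comp_update]
    exact lt_update_self_iff.2 hc

end DominatingSpan

section Main

variable (hφ : IsWreathProduct φ) (hD : D.IsCyclicLift y vv) (hl : Function.Surjective l)
  (hsw : ∀ (a : Fin n → A) (π : Equiv.Perm (Fin n)),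
    starW (wm φ a π) = wm φ (fun i => D.star (a (π i))) π⁻¹)
include hφ hD hl hsw

lemma wreathSum_rowLabel_mem_of_isStdTableau {U : MCells lam ≃ Fin n} (hU : IsStdTableau U)
    (tl : MCells lam ≃ Fin n) (a : Fin n → A) :
    wreathSum φ (a * yVec y l (rowLabel U)) 1 (rowLabel U) (rowLabel tl) ∈
      murphySpan φ y vv l tl ⊔ dominatingSpan φ y vv l starW lam := by
  refine wreathSum_mem_of_forall_vv_left hφ hD hl (fun i j c a b hc => ?_) (fun v hv => ?_) a
  · exact Submodule.mem_sup_right <| wreathSum_mem_dominatingSpan hφ hD hl hsw U a b _ _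
      (domCount_lt_update hc)
  · obtain ⟨τ, rfl⟩ := exists_vVec_eq hv
    rw [← sElt_mul_vElt_mul_eq_wreathSum y vv l tl U hφ]
    exact Submodule.mem_sup_left (Submodule.subset_span ⟨U, τ, hU, rfl⟩)

lemma wreathSum_rowLabel_mem (V tl : MCells lam ≃ Fin n) (a : Fin n → A) :
    wreathSum φ (a * yVec y l (rowLabel V)) 1 (rowLabel V) (rowLabel tl) ∈
      murphySpan φ y vv l tl ⊔ dominatingSpan φ y vv l starW lam := by
  rw [wreathSum_eq_labelSum]
  refine labelSum_mem_of_isBallot_left _ _ (fun f h hf _ => ?_) fun f hf hfst =>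
    labelSum_mem_of_comp_eq fun g hg => ?_
  · rw [← wreathSum_eq_labelSum, ← yVec_eq_of_fst_eq y l hf.fst_comp]
    exact Submodule.mem_sup_right <| wreathSum_mem_dominatingSpan hφ hD hl hsw V a 1 f h
      hf.domCount_lt
  · obtain ⟨U, hU, rfl⟩ := hf.exists_isStdTableau (mu := lam) fun k i =>
      (card_filter_eq_of_comp_eq hg (k, i)).symm.trans (card_rowLabel_eq tl k i)
    rw [← wreathSum_eq_labelSum, ← yVec_eq_of_fst_eq y l hfst]
    exact wreathSum_rowLabel_mem_of_isStdTableau hφ hD hl hsw hU tl a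

lemma sElt_mul_mem_murphySpan_sup (π : Equiv.Perm (Fin n)) (tl S : MCells lam ≃ Fin n)
    (τ : ∀ x : MCells lam, T (l x.1)) :
    sElt φ π * (sElt φ (dperm tl S) * vElt φ vv l tl τ * yaElt φ y l tl * xlamElt φ tl) ∈
      murphySpan φ y vv l tl ⊔ dominatingSpan φ y vv l starW lam := by
  rw [← mul_assoc, ← mul_assoc, ← mul_assoc, sElt_mul_sElt_dperm tl S hφ,
    sElt_mul_vElt_mul_eq_wreathSum y vv l tl (S.trans π) hφ]
  exact wreathSum_rowLabel_mem hφ hD hl hsw (S.trans π) tl _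

end Main

end WreathStraightening

theorem stmt_15_general {R : Type*} [CommRing R] {A : Type*} [Ring A] [Algebra R A]
    {Γ : Type*} [PartialOrder Γ] {T : Γ → Type*} [∀ γ, Fintype (T γ)]
    (D : CellDatum R A Γ T)
    (M : Γ → Type*) [∀ γ, AddCommGroup (M γ)] [∀ γ, Module R (M γ)]
    [∀ γ, Module A (M γ)] [∀ γ, IsScalarTower R A (M γ)]
    (e : ∀ γ, T γ → M γ) (hM : ∀ γ, IsCellModule D γ (M γ) (e γ))
    (δ : ∀ γ, M γ) (p : ∀ γ, T γ → R) (hp : ∀ γ, ∑ s : T γ, p γ s • e γ s = δ γ)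
    (y : Γ → A)
    (hylift : ∀ γ, y γ - ∑ s : T γ, ∑ t : T γ, (p γ s * p γ t) • D.c γ s t ∈ D.Abar γ)
    (vv : ∀ γ, T γ → A) (hvv : ∀ γ (t : T γ), vv γ t • δ γ = e γ t)
    {r : ℕ} (l : Fin r → Γ) (hl : Function.Surjective l)
    {n : ℕ} {lam : Fin r → YoungDiagram} (tl : MCells lam ≃ Fin n)
    {W : Type*} [Ring W] [Algebra R W]
    (φ : ((⨂[R] _ : Fin n, A) ⊗[R] (Equiv.Perm (Fin n) →₀ R)) ≃ₗ[R] W)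
    (hone : wm φ (fun _ => (1 : A)) 1 = 1)
    (hmul : ∀ (a b : Fin n → A) (π σ : Equiv.Perm (Fin n)),
      wm φ a π * wm φ b σ = wm φ (fun i => a i * b (π⁻¹ i)) (π * σ))
    (starW : W →ₗ[R] W)
    (hsw : ∀ (a : Fin n → A) (π : Equiv.Perm (Fin n)),
      starW (wm φ a π) = wm φ (fun i => D.star (a (π i))) π⁻¹)
    (π : Equiv.Perm (Fin n)) (S : MCells lam ≃ Fin n) (τ : ∀ x : MCells lam, T (l x.1)) :
    sElt φ π * (sElt φ (dperm tl S) * vElt φ vv l tl τ * yaElt φ y l tl * xlamElt φ tl) ∈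
      murphySpan φ y vv l tl ⊔ dominatingSpan φ y vv l starW lam := by
  have : Finite Γ := Finite.of_surjective l hl
  have hD : D.IsCyclicLift y vv := D.isCyclicLift hM (fun γ => SModEq.sub_mem.2 (hylift γ))
    fun γ t => (hp γ).symm ▸ hvv γ t
  exact sElt_mul_mem_murphySpan_sup ⟨hone, hmul⟩ hD hl hsw π tl S τ

/-- Let `A` be cyclic cellular and `λ ∈ Λ_n^Γ`.  If `s` is a standard
`λ`-tableau, `v ∈ V^α` and `π ∈ 𝔖_n`, then in `A ≀ 𝔖_n`,
`π · m^λ_{(s,v),(t^λ,1)}` lies in (span of the elements `m^λ_{(u,v'),(t^λ,1)}` with `u`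
standard and `v' ∈ V^α`) + `N̄^λ`, where `N̄^λ` is spanned by the Murphy-type basis elements
indexed by multipartitions `μ` strictly `Γ`-dominating `λ`. -/
theorem stmt_15 {R : Type*} [CommRing R] [IsDomain R] {A : Type*} [Ring A] [Algebra R A]
    {Γ : Type*} [PartialOrder Γ] {T : Γ → Type*} [∀ γ, Fintype (T γ)]
    (D : CellDatum R A Γ T)
    (M : Γ → Type*) [∀ γ, AddCommGroup (M γ)] [∀ γ, Module R (M γ)]
    [∀ γ, Module A (M γ)] [∀ γ, IsScalarTower R A (M γ)]
    (e : ∀ γ, T γ → M γ) (hM : ∀ γ, IsCellModule D γ (M γ) (e γ))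
    (δ : ∀ γ, M γ) (hδ : ∀ γ, Submodule.span A {δ γ} = ⊤)
    (p : ∀ γ, T γ → R) (hp : ∀ γ, ∑ s : T γ, p γ s • e γ s = δ γ)
    (y : Γ → A) (hymem : ∀ γ, y γ ∈ D.Aup γ)
    (hylift : ∀ γ,
      y γ - ∑ s : T γ, ∑ t : T γ, (p γ s * p γ t) • D.c γ s t ∈ D.Abar γ)
    (vv : ∀ γ, T γ → A) (hvv : ∀ γ (t : T γ), vv γ t • δ γ = e γ t)
    {r : ℕ} (l : Fin r → Γ) (hl : Function.Bijective l)
    (hcomp : ∀ i j : Fin r, l j ≤ l i → i ≤ j)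
    (n : ℕ) (lam : Fin r → YoungDiagram) (hlam : ∑ k, (lam k).card = n)
    (tl : MCells lam ≃ Fin n) (htl : IsSuperstandard tl)
    (W : Type*) [Ring W] [Algebra R W]
    (φ : ((⨂[R] _ : Fin n, A) ⊗[R] (Equiv.Perm (Fin n) →₀ R)) ≃ₗ[R] W)
    (hone : wm φ (fun _ => (1 : A)) 1 = 1)
    (hmul : ∀ (a b : Fin n → A) (π σ : Equiv.Perm (Fin n)),
      wm φ a π * wm φ b σ = wm φ (fun i => a i * b (π⁻¹ i)) (π * σ))
    (starW : W →ₗ[R] W)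
    (hsw : ∀ (a : Fin n → A) (π : Equiv.Perm (Fin n)),
      starW (wm φ a π) = wm φ (fun i => D.star (a (π i))) π⁻¹) :
    ∀ (π : Equiv.Perm (Fin n)) (S : MCells lam ≃ Fin n), IsStdTableau S →
    ∀ τ : ∀ x : MCells lam, T (l x.1),
      sElt φ π * (sElt φ (dperm tl S) * vElt φ vv l tl τ * yaElt φ y l tl * xlamElt φ tl)
        ∈ Submodule.span R
            {x : W | ∃ (U : MCells lam ≃ Fin n) (τ' : ∀ x : MCells lam, T (l x.1)),
              IsStdTableau U ∧
              x = sElt φ (dperm tl U) * vElt φ vv l tl τ' * yaElt φ y l tl * xlamElt φ tl}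
          ⊔ Submodule.span R
            {x : W | ∃ mu : Fin r → YoungDiagram, (∑ k, (mu k).card = n) ∧
              GDomL l mu lam ∧ mu ≠ lam ∧
              ∃ (tm : MCells mu ≃ Fin n), IsSuperstandard tm ∧
              ∃ (U U' : MCells mu ≃ Fin n), IsStdTableau U ∧ IsStdTableau U' ∧
              ∃ (τu τu' : ∀ x : MCells mu, T (l x.1)),
                x = mwElt φ starW y vv l tm U U' τu τu'} :=
  fun π S _ τ => stmt_15_general D M e hM δ p hp y hylift vv hvv l hl.surjective tl φ hone hmul
    starW hsw π S τ
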